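/- arXiv:2401.09611 — 2 statements merged into one kernel-verified Lean document; each statement's English description precedes it below -/
import Mathlib

section
/- Let n ≥ 2 and 1 ≤ α < n. Then there is a constant c_n such that for every f ∈ C_c^∞(ℝ^n) and every x ∈ ℝ^n, 𝒮_{α−1} f(x) ≤ c_n I_α(|∇f|)(x). -/
open MeasureTheory Metric Set Filter
open scoped ENNReal NNReal Topology

noncomputable section

abbrev Rn (n : ℕ) := EuclideanSpace ℝ (Fin n)

/-- An axis-parallel half-open cube in `ℝⁿ`. -/
structure Cube (n : ℕ) where
  corner : Fin n → ℝ
  side : ℝ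
  side_pos : 0 < side

/-- The set of points of a cube. -/
def Cube.carrier {n : ℕ} (Q : Cube n) : Set (Rn n) :=
  {x | ∀ i, Q.corner i ≤ x i ∧ x i < Q.corner i + Q.side}

/-- Surface measure on the unit sphere `𝕊^{n-1} ⊆ ℝⁿ`. -/
def sphereMeasure (n : ℕ) : Measure (Rn n) :=
  (MeasureTheory.Measure.hausdorffMeasure ((n : ℝ) - 1)).restrict (sphere (0 : Rn n) 1)

/-- `f ∈ C_c^∞(ℝⁿ)`. -/
def IsCcSmooth {n : ℕ} (f : Rn n → ℝ) : Prop :=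
  ContDiff ℝ (⊤ : ℕ∞) f ∧ HasCompactSupport f

/-- Truncated rough fractional singular integral. -/
def roughOpTrunc (n : ℕ) (α : ℝ) (Ω f : Rn n → ℝ) (x : Rn n) (ε : ℝ) : ℝ :=
  ∫ y in {y : Rn n | ε < ‖y‖}, (Ω (‖y‖⁻¹ • y) / ‖y‖ ^ ((n : ℝ) + 1 - α)) * f (x - y)

/-- The rough fractional singular integral `T_{Ω,α} f`, as a principal value. -/
def roughOp (n : ℕ) (α : ℝ) (Ω f : Rn n → ℝ) (x : Rn n) : ℝ :=
  limUnder (𝓝[>] (0 : ℝ)) (roughOpTrunc n α Ω f x)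

/-- Riesz potential (modulo its normalizing constant) of a nonnegative function. -/
def rieszPot (n : ℕ) (α : ℝ) (g : Rn n → ℝ) (x : Rn n) : ℝ≥0∞ :=
  ∫⁻ y, ENNReal.ofReal (g y) / ENNReal.ofReal (‖x - y‖ ^ ((n : ℝ) - α))

/-- `|∇f|`. -/
def gradNorm {n : ℕ} (f : Rn n → ℝ) (y : Rn n) : ℝ := ‖gradient f y‖

/-- Weak Lorentz norm `‖Ω‖_{L^{r,∞}(𝕊^{n-1})}`. -/
def weakLorentzSphere (n : ℕ) (r : ℝ) (Ω : Rn n → ℝ) : ℝ≥0∞ :=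
  ⨆ (t : ℝ) (_ : 0 < t), ENNReal.ofReal t * sphereMeasure n {y | t < |Ω y|} ^ (1 / r)

/-- Lorentz norm `‖Ω‖_{L^{r,q}(𝕊^{n-1})}`. -/
def lorentzSphere (n : ℕ) (r q : ℝ) (Ω : Rn n → ℝ) : ℝ≥0∞ :=
  (ENNReal.ofReal r *
      ∫⁻ t in Ioi (0 : ℝ),
        ENNReal.ofReal t ^ q * sphereMeasure n {y | t < |Ω y|} ^ (q / r) / ENNReal.ofReal t) ^ (1 / q)

/-- The Young function `Φ(t) = t log(1+t)^{1/n'}`, `1/n' = (n-1)/n`. -/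
def orliczYoung (n : ℕ) (t : ℝ) : ℝ := t * Real.log (1 + t) ^ (((n : ℝ) - 1) / n)

/-- Admissible Orlicz levels for the `L(log L)^{1/n'}` norm w.r.t. normalized surface measure. -/
def orliczSet (n : ℕ) (Ω : Rn n → ℝ) : Set ℝ :=
  {lam | 0 < lam ∧ ⨍ y, orliczYoung n (|Ω y| / lam) ∂sphereMeasure n ≤ 1}

/-- Orlicz norm `‖Ω‖_{L(log L)^{1/n'}(𝕊^{n-1})}`. -/
def orliczSphereNorm (n : ℕ) (Ω : Rn n → ℝ) : ℝ := sInf (orliczSet n Ω)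

/-- A sparse family of cubes. -/
def IsSparse {n : ℕ} (𝒮 : Set (Cube n)) : Prop :=
  ∃ E : Cube n → Set (Rn n),
    (∀ Q ∈ 𝒮, E Q ⊆ Q.carrier ∧ volume Q.carrier ≤ 2 * volume (E Q)) ∧
    𝒮.Pairwise fun Q P => Disjoint (E Q) (E P)

/-- A dyadic grid of cubes. -/
def IsDyadicGrid {n : ℕ} (𝒟 : Set (Cube n)) : Prop :=
  (∀ Q ∈ 𝒟, ∃ k : ℤ, Q.side = (2 : ℝ) ^ k) ∧
  (∀ (k : ℤ) (x : Rn n), ∃! Q : Cube n, Q ∈ 𝒟 ∧ Q.side = (2 : ℝ) ^ k ∧ x ∈ Q.carrier) ∧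
  (∀ Q ∈ 𝒟, ∀ P ∈ 𝒟, Disjoint Q.carrier P.carrier ∨ Q.carrier ⊆ P.carrier ∨ P.carrier ⊆ Q.carrier)

/-- The shifted dyadic grid `𝒟_t = {2^k([0,1)^n + m + (-1)^k t)}`. -/
def shiftedGrid (n : ℕ) (t : Fin n → ℝ) : Set (Cube n) :=
  {Q | ∃ (k : ℤ) (m : Fin n → ℤ),
      Q.side = (2 : ℝ) ^ k ∧ Q.corner = fun i => (2 : ℝ) ^ k * ((m i : ℝ) + (-1 : ℝ) ^ k * t i)}

/-- `(⨍_Q |g|^s)^{1/s}` as an extended nonnegative real. -/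
def avgLs (n : ℕ) (s : ℝ) (Q : Cube n) (g : Rn n → ℝ) : ℝ≥0∞ :=
  ((volume Q.carrier)⁻¹ * ∫⁻ y in Q.carrier, ENNReal.ofReal |g y| ^ s) ^ (1 / s)

/-- The `L^s` sparse (or dyadic) fractional operator `I^𝒮_{α,L^s}`. -/
def sparseOpLs (n : ℕ) (α s : ℝ) (𝒮 : Set (Cube n)) (g : Rn n → ℝ) (x : Rn n) : ℝ≥0∞ :=
  ∑' Q : 𝒮, Set.indicator (Q : Cube n).carrier
      (fun _ => ENNReal.ofReal ((Q : Cube n).side ^ α) * avgLs n s (Q : Cube n) g) x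

/-- The `L^s` fractional maximal operator `M_{α,L^s}`. -/
def maxOpLs (n : ℕ) (α s : ℝ) (g : Rn n → ℝ) (x : Rn n) : ℝ≥0∞ :=
  ⨆ (Q : Cube n) (_ : x ∈ Q.carrier), ENNReal.ofReal (Q.side ^ α) * avgLs n s Q g

/-- The measure `w dx` associated with a weight `w`. -/
def wMeasure (n : ℕ) (w : Rn n → ℝ) : Measure (Rn n) :=
  volume.withDensity fun x => ENNReal.ofReal (w x)

/-- Muckenhoupt `A_∞` (via the standard fair-proportion characterization). -/
def IsAinfty {n : ℕ} (w : Rn n → ℝ) : Prop :=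
  ∃ C > (0 : ℝ), ∃ δ > (0 : ℝ), ∀ Q : Cube n, ∀ S ⊆ Q.carrier, MeasurableSet S →
    wMeasure n w S ≤
      ENNReal.ofReal C * (volume S / volume Q.carrier) ^ δ * wMeasure n w Q.carrier

/-- `‖g‖_{L^p(w)}` for an `ℝ≥0∞`-valued `g`. -/
def lpNormW (n : ℕ) (p : ℝ) (w : Rn n → ℝ) (g : Rn n → ℝ≥0∞) : ℝ≥0∞ :=
  (∫⁻ x, g x ^ p ∂wMeasure n w) ^ (1 / p)

/-- `‖g‖_{L^{p,∞}(w)}` for an `ℝ≥0∞`-valued `g`. -/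
def weakNormW (n : ℕ) (p : ℝ) (w : Rn n → ℝ) (g : Rn n → ℝ≥0∞) : ℝ≥0∞ :=
  ⨆ (lam : ℝ) (_ : 0 < lam),
    ENNReal.ofReal lam * wMeasure n w {x | ENNReal.ofReal lam < g x} ^ (1 / p)

/-- Unweighted `L^p` "norm" of an `ℝ≥0∞`-valued function. -/
def lqNorm (n : ℕ) (p : ℝ) (g : Rn n → ℝ≥0∞) : ℝ≥0∞ :=
  (∫⁻ x, g x ^ p) ^ (1 / p)

/-- Unweighted weak `L^p` norm of an `ℝ≥0∞`-valued function. -/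
def weakNorm (n : ℕ) (p : ℝ) (g : Rn n → ℝ≥0∞) : ℝ≥0∞ :=
  ⨆ (lam : ℝ) (_ : 0 < lam),
    ENNReal.ofReal lam * volume {x | ENNReal.ofReal lam < g x} ^ (1 / p)

/-- Maximal function of a measure over cubes. -/
def measMax (n : ℕ) (μ : Measure (Rn n)) (x : Rn n) : ℝ≥0∞ :=
  ⨆ (Q : Cube n) (_ : x ∈ Q.carrier), μ Q.carrier / volume Q.carrier

/-- The rough fractional maximal operator `M_{Ω,α}`. -/
def roughMax (n : ℕ) (α : ℝ) (Ω f : Rn n → ℝ) (x : Rn n) : ℝ≥0∞ :=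
  ⨆ (t : ℝ) (_ : 0 < t),
    ENNReal.ofReal (t ^ (α - 1)) * ((volume (ball (0 : Rn n) t))⁻¹ *
      ∫⁻ y in ball (0 : Rn n) t, ENNReal.ofReal |Ω (‖y‖⁻¹ • y) * f (x - y)|)

/-- Average of `f` over the ball `B(x,t)`. -/
def ballAvg {n : ℕ} (f : Rn n → ℝ) (x : Rn n) (t : ℝ) : ℝ :=
  ⨍ y in ball x t, f y

/-- The sharp rough fractional maximal operator `M^#_{Ω,α}`. -/
def roughMaxSharp (n : ℕ) (α : ℝ) (Ω f : Rn n → ℝ) (x : Rn n) : ℝ≥0∞ :=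
  ⨆ (t : ℝ) (_ : 0 < t),
    ENNReal.ofReal (t ^ (α - 1)) * ((volume (ball (0 : Rn n) t))⁻¹ *
      ∫⁻ y in ball (0 : Rn n) t,
        ENNReal.ofReal (|Ω (‖y‖⁻¹ • y)| * |f (x - y) - ballAvg f x t|))

/-- The natural rough maximal operator `M^♮_Ω` (with `α = 1`). -/
def roughMaxNatural (n : ℕ) (Ω f : Rn n → ℝ) (x : Rn n) : ℝ≥0∞ :=
  ⨆ (t : ℝ) (_ : 0 < t),
    ENNReal.ofReal |⨍ y in ball (0 : Rn n) t, Ω (‖y‖⁻¹ • y) * f (x - y)|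

/-- The fractional spherical maximal operator `𝒮_β`. -/
def sphMax (n : ℕ) (β : ℝ) (f : Rn n → ℝ) (x : Rn n) : ℝ≥0∞ :=
  ⨆ (r : ℝ) (_ : 0 < r),
    ENNReal.ofReal (r ^ β) *
      ((MeasureTheory.Measure.hausdorffMeasure ((n : ℝ) - 1) (sphere x r))⁻¹ *
        ∫⁻ y in sphere x r, ENNReal.ofReal |f y|
          ∂(MeasureTheory.Measure.hausdorffMeasure ((n : ℝ) - 1)))


/-- The measure `w^q dx`. -/
def wqMeasure (n : ℕ) (q : ℝ) (w : Rn n → ℝ) : Measure (Rn n) :=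
  volume.withDensity fun x => ENNReal.ofReal (w x) ^ q

/-- Weak norm `‖g‖_{L^{q,∞}(w^q)}` for `ℝ≥0∞`-valued `g`. -/
def weakNormWq (n : ℕ) (q : ℝ) (w : Rn n → ℝ) (g : Rn n → ℝ≥0∞) : ℝ≥0∞ :=
  ⨆ (lam : ℝ) (_ : 0 < lam),
    ENNReal.ofReal lam * wqMeasure n q w {x | ENNReal.ofReal lam < g x} ^ (1 / q)

section Aux
open scoped Pointwise

lemma aux_compare {X : Type*} [PseudoMetricSpace X] [SecondCountableTopology X] [MeasurableSpace X]
    [BorelSpace X] (μ ν : Measure X) [IsFiniteMeasure μ] [IsFiniteMeasure ν]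
    (hμ : ∀ ρ > 0, ∀ x y : X, μ (ball x ρ) = μ (ball y ρ))
    (hν : ∀ ρ > 0, ∀ x y : X, ν (ball x ρ) = ν (ball y ρ))
    (hpos : ∀ ρ > 0, ∀ x : X, ν (ball x ρ) ≠ 0)
    (G : X → ℝ) (hG : UniformContinuous G) :
    ν univ * ∫⁻ x, ENNReal.ofReal (G x) ∂μ ≤ μ univ * ∫⁻ x, ENNReal.ofReal (G x) ∂ν := by
  rcases isEmpty_or_nonempty X with hX | ⟨⟨o⟩⟩
  · simp [Measure.eq_zero_of_isEmpty]
  have key : ∀ ε : ℝ, 0 < ε → ν univ * ∫⁻ x, ENNReal.ofReal (G x) ∂μ ≤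
      μ univ * (∫⁻ x, ENNReal.ofReal (G x) ∂ν + ENNReal.ofReal ε * ν univ) := by
    intro ε hε
    obtain ⟨ρ, hρ, hGρ⟩ := Metric.uniformContinuous_iff.1 hG ε hε
    set h := μ (ball o ρ)
    set k := ν (ball o ρ)
    have hk0 : k ≠ 0 := hpos ρ hρ o
    have hkt : k ≠ ∞ := measure_ne_top _ _
    have hms : MeasurableSet {p : X × X | dist p.1 p.2 < ρ} :=
      (isOpen_lt (by fun_prop) (by fun_prop)).measurableSet
    have hGm : Measurable fun x => ENNReal.ofReal (G x) := by
      have := hG.continuous.measurable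
      fun_prop
    -- generic Fubini
    have fub : ∀ F : X → ℝ≥0∞, Measurable F →
        k * ∫⁻ x, F x ∂μ = ∫⁻ y, ∫⁻ x in ball y ρ, F x ∂μ ∂ν := by
      intro F hF
      have h1 : ∀ x, ∫⁻ y, {p : X × X | dist p.1 p.2 < ρ}.indicator (fun p => F p.1) (x, y) ∂ν
          = k * F x := by
        intro x
        have : ∀ y, {p : X × X | dist p.1 p.2 < ρ}.indicator (fun p => F p.1) (x, y)
          = (ball x ρ).indicator (fun _ => F x) y := by
          intro y
          simp [indicator, dist_comm]
        simp_rw [this]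
        rw [lintegral_indicator_const measurableSet_ball, hν ρ hρ x o, mul_comm]
      have h2 : ∀ y, ∫⁻ x, {p : X × X | dist p.1 p.2 < ρ}.indicator (fun p => F p.1) (x, y) ∂μ
          = ∫⁻ x in ball y ρ, F x ∂μ := by
        intro y
        rw [← lintegral_indicator measurableSet_ball]
        rfl
      rw [← lintegral_const_mul _ hF]
      simp_rw [← h1, ← h2]
      apply lintegral_lintegral_swap
      apply Measurable.aemeasurable
      exact (hF.comp measurable_fst).indicator hms
    have hk : k * μ univ = h * ν univ := by
      have := fub (fun _ => 1) measurable_const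
      simp only [lintegral_const, one_mul, Measure.restrict_apply MeasurableSet.univ,
        univ_inter] at this
      rw [this]
      simp_rw [hμ ρ hρ _ o]
      simp [h]
    have h3 : k * ∫⁻ x, ENNReal.ofReal (G x) ∂μ ≤
        h * (∫⁻ x, ENNReal.ofReal (G x) ∂ν + ENNReal.ofReal ε * ν univ) := by
      rw [fub _ hGm]
      calc _ ≤ ∫⁻ y, h * (ENNReal.ofReal (G y) + ENNReal.ofReal ε) ∂ν := by
            apply lintegral_mono
            intro y
            calc _ ≤ ∫⁻ x in ball y ρ, (ENNReal.ofReal (G y) + ENNReal.ofReal ε) ∂μ := by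
                  apply setLIntegral_mono measurable_const
                  intro x hx
                  refine le_trans (ENNReal.ofReal_le_ofReal ?_) ENNReal.ofReal_add_le
                  have := hGρ (mem_ball.1 hx)
                  rw [Real.dist_eq] at this
                  linarith [le_abs_self (G x - G y)]
              _ = _ := by
                  rw [setLIntegral_const, hμ ρ hρ y o, mul_comm]
        _ = _ := by
            rw [lintegral_const_mul _ (by fun_prop), lintegral_add_right _ measurable_const,
              lintegral_const]
    refine (ENNReal.mul_le_mul_iff_right hk0 hkt).1 ?_
    calc k * (ν univ * ∫⁻ x, ENNReal.ofReal (G x) ∂μ)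
        = ν univ * (k * ∫⁻ x, ENNReal.ofReal (G x) ∂μ) := by ring
      _ ≤ ν univ * (h * (∫⁻ x, ENNReal.ofReal (G x) ∂ν + ENNReal.ofReal ε * ν univ)) := by gcongr
      _ = (h * ν univ) * (∫⁻ x, ENNReal.ofReal (G x) ∂ν + ENNReal.ofReal ε * ν univ) := by ring
      _ = _ := by rw [← hk]; ring
  have lim : Tendsto (fun ε : ℝ => μ univ * (∫⁻ x, ENNReal.ofReal (G x) ∂ν
      + ENNReal.ofReal ε * ν univ)) (𝓝[>] 0) (𝓝 (μ univ * (∫⁻ x, ENNReal.ofReal (G x) ∂ν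
      + ENNReal.ofReal 0 * ν univ))) := by
    apply Tendsto.mono_left _ nhdsWithin_le_nhds
    refine ENNReal.Tendsto.const_mul ?_ (Or.inr (measure_ne_top _ _))
    refine Tendsto.add tendsto_const_nhds ?_
    exact ENNReal.Tendsto.mul_const (ENNReal.tendsto_ofReal tendsto_id)
      (Or.inr (measure_ne_top _ _))
  have := ge_of_tendsto lim (eventually_mem_nhdsWithin.mono fun ε hε => key ε hε)
  simpa using this

lemma aux_ball (n : ℕ) (ρ : ℝ) (a b : sphere (0 : Rn n) 1) :
    ∃ R : Rn n ≃ₗᵢ[ℝ] Rn n, (Subtype.val '' ball b ρ : Set (Rn n)) =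
      R '' (Subtype.val '' ball a ρ) := by
  have hab : ‖(a : Rn n)‖ = ‖(b : Rn n)‖ := by simp
  refine ⟨(ℝ ∙ ((a : Rn n) - b))ᗮ.reflection, ?_⟩
  have h := Submodule.reflection_sub hab
  set R := (ℝ ∙ ((a : Rn n) - b))ᗮ.reflection
  ext y
  rw [Subtype.image_ball, Subtype.image_ball]
  rw [LinearIsometryEquiv.image_eq_preimage_symm]
  have h' : R.symm b = a := by rw [← h]; simp
  have : dist (R.symm y) a = dist y b := by
    rw [← h', LinearIsometryEquiv.dist_map]
  have h2 : R.symm y ∈ sphere (0 : Rn n) 1 ↔ y ∈ sphere (0 : Rn n) 1 := by simp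
  simp only [mem_preimage, mem_ofPred_eq, mem_inter_iff, mem_ball, this, h2]

lemma aux_nu (n : ℕ) (ρ : ℝ) (a b : sphere (0 : Rn n) 1) :
    (volume : Measure (Rn n)).toSphere (ball a ρ) =
    (volume : Measure (Rn n)).toSphere (ball b ρ) := by
  obtain ⟨R, hR⟩ := aux_ball n ρ a b
  rw [Measure.toSphere_apply' _ measurableSet_ball, Measure.toSphere_apply' _ measurableSet_ball,
    hR]
  congr 1
  have : Ioo (0:ℝ) 1 • (R '' (Subtype.val '' ball a ρ)) =
      R '' (Ioo (0:ℝ) 1 • (Subtype.val '' ball a ρ)) := by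
    rw [← image2_smul, ← image2_smul, image_image2, image2_image_right]
    simp
  rw [this, LinearIsometryEquiv.image_eq_preimage_symm]
  exact (R.symm.measurePreserving.measure_preimage_equiv
    (f := R.symm.toHomeomorph.toMeasurableEquiv) _).symm

lemma aux_emb (n : ℕ) (x : Rn n) (r : ℝ) (hr : 0 < r) :
    MeasurableEmbedding (fun w : sphere (0 : Rn n) 1 => x + r • (w : Rn n)) := by
  apply Topology.IsClosedEmbedding.measurableEmbedding
  apply Topology.IsClosedEmbedding.of_continuous_injective_isClosedMap
  · fun_prop
  · intro a b h
    have := smul_right_injective (Rn n) hr.ne' (add_left_cancel h)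
    exact Subtype.ext this
  · exact Continuous.isClosedMap (by fun_prop)

lemma aux_range (n : ℕ) (x : Rn n) (r : ℝ) (hr : 0 < r) :
    range (fun w : sphere (0 : Rn n) 1 => x + r • (w : Rn n)) = sphere x r := by
  ext y
  constructor
  · rintro ⟨w, rfl⟩
    simp [norm_smul, abs_of_pos hr]
  · intro hy
    rw [mem_sphere, dist_eq_norm] at hy
    refine ⟨⟨r⁻¹ • (y - x), ?_⟩, ?_⟩
    · simp [norm_smul, hy, abs_of_pos hr, hr.ne']
    · simp [smul_smul, hr.ne']

lemma aux_mu (n : ℕ) (d : ℝ) (x : Rn n) (r : ℝ) (hr : 0 < r) (ρ : ℝ) (a b : sphere (0 : Rn n) 1) :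
    (Measure.hausdorffMeasure d : Measure (Rn n)).comap
      (fun w : sphere (0 : Rn n) 1 => x + r • (w : Rn n)) (ball a ρ) =
    (Measure.hausdorffMeasure d : Measure (Rn n)).comap
      (fun w : sphere (0 : Rn n) 1 => x + r • (w : Rn n)) (ball b ρ) := by
  obtain ⟨R, hR⟩ := aux_ball n ρ a b
  rw [(aux_emb n x r hr).comap_apply, (aux_emb n x r hr).comap_apply]
  have h1 : ∀ s : Set (sphere (0 : Rn n) 1), (fun w : sphere (0 : Rn n) 1 => x + r • (w : Rn n)) '' s
    = (fun w => x + r • w) '' (Subtype.val '' s) := by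
    intro s; rw [image_image]
  rw [h1, h1, hR]
  let T : Rn n ≃ᵢ Rn n := ((IsometryEquiv.subRight x).trans R.toIsometryEquiv).trans
    (IsometryEquiv.addLeft x)
  have : (fun w => x + r • w) '' (R '' (Subtype.val '' ball a ρ)) =
      T '' ((fun w => x + r • w) '' (Subtype.val '' ball a ρ)) := by
    simp only [image_image]
    refine image_congr fun w _ => ?_
    simp [T]
  rw [this, T.hausdorffMeasure_image]

lemma aux_avg (n : ℕ) (hn : 2 ≤ n) (d : ℝ) (x : Rn n) (r : ℝ) (hr : 0 < r) (f : Rn n → ℝ)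
    (hf : UniformContinuous f) :
    (Measure.hausdorffMeasure d (sphere x r))⁻¹ *
      ∫⁻ y in sphere x r, ENNReal.ofReal |f y| ∂(Measure.hausdorffMeasure d) ≤
    ((volume : Measure (Rn n)).toSphere univ)⁻¹ *
      ∫⁻ w, ENNReal.ofReal |f (x + r • (w : Rn n))| ∂(volume : Measure (Rn n)).toSphere := by
  have : Nonempty (Fin n) := ⟨⟨0, by omega⟩⟩
  have : Nontrivial (Rn n) := inferInstance
  set H : Measure (Rn n) := Measure.hausdorffMeasure d
  set ν := (volume : Measure (Rn n)).toSphere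
  by_cases h0 : H (sphere x r) = 0
  · rw [Measure.restrict_eq_zero.2 h0]; simp
  by_cases ht : H (sphere x r) = ∞
  · simp [ht]
  have hemb := aux_emb n x r hr
  set e := (fun w : sphere (0 : Rn n) 1 => x + r • (w : Rn n)) with he
  set μ := H.comap e with hμ
  have hmap : μ.map e = H.restrict (sphere x r) := by
    rw [hμ, hemb.map_comap, aux_range n x r hr]
  have huniv : μ univ = H (sphere x r) := by
    rw [hμ, hemb.comap_apply, image_univ, aux_range n x r hr]
  have : IsFiniteMeasure μ := ⟨by rw [huniv]; exact lt_top_iff_ne_top.2 ht⟩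
  have key := aux_compare μ ν (fun ρ _ a b => aux_mu n d x r hr ρ a b)
    (fun ρ _ a b => aux_nu n ρ a b)
    (fun ρ hρ a => isOpen_ball.measure_ne_zero _ ⟨a, mem_ball_self hρ⟩)
    (fun w => |f (e w)|) (by
      apply CompactSpace.uniformContinuous_of_continuous
      have := hf.continuous
      simp only [he]
      fun_prop)
  rw [← hmap, hemb.lintegral_map, ← huniv]
  have hν0 : ν univ ≠ 0 := by
    rw [Ne, Measure.measure_univ_eq_zero]
    exact Measure.toSphere_ne_zero _
  have hνt : ν univ ≠ ∞ := measure_ne_top _ _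
  rw [← huniv] at h0 ht
  rw [ENNReal.inv_mul_le_iff h0 ht, ← mul_assoc, mul_comm (μ univ), mul_assoc,
    ← ENNReal.mul_le_iff_le_inv hν0 hνt]
  exact key

lemma aux_grad {n : ℕ} (f : Rn n → ℝ) (y : Rn n) : gradNorm f y = ‖fderiv ℝ f y‖ := by
  simp [gradNorm, gradient]

lemma aux_ray {n : ℕ} (f : Rn n → ℝ) (hf : IsCcSmooth f) (x w : Rn n) (hw : ‖w‖ = 1) (r : ℝ) :
    ENNReal.ofReal |f (x + r • w)| ≤
      ∫⁻ t in Ioi r, ENNReal.ofReal (gradNorm f (x + t • w)) := by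
  obtain ⟨h1, h2⟩ := hf
  have h1' : ContDiff ℝ 1 f := h1.of_le (by exact_mod_cast le_top)
  have hiso : Isometry (fun s : ℝ => x + (-s) • w) := by
    refine Isometry.of_dist_eq fun a b => ?_
    rw [dist_add_left, dist_eq_norm, ← sub_smul, norm_smul, hw, mul_one, Real.norm_eq_abs,
      Real.dist_eq, ← abs_neg]
    ring_nf
  have hφ : ContDiff ℝ 1 (f ∘ fun s : ℝ => x + (-s) • w) := h1'.comp (by fun_prop)
  have hc : HasCompactSupport (f ∘ fun s : ℝ => x + (-s) • w) :=
    h2.comp_isClosedEmbedding hiso.isClosedEmbedding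
  have key := HasCompactSupport.enorm_le_lintegral_Ici_deriv hφ hc (-r)
  have e1 : ‖(f ∘ fun s : ℝ => x + (-s) • w) (-r)‖ₑ = ENNReal.ofReal |f (x + r • w)| := by
    simp [Real.enorm_eq_ofReal_abs]
  rw [e1] at key
  refine key.trans ?_
  have e2 : ∫⁻ t in Ioi r, ENNReal.ofReal (gradNorm f (x + t • w)) =
      ∫⁻ s in Iic (-r), ENNReal.ofReal (gradNorm f (x + (-s) • w)) := by
    have := (Measure.measurePreserving_neg (volume : Measure ℝ)).setLIntegral_comp_preimage_emb
      (Homeomorph.neg ℝ).measurableEmbedding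
      (fun t => ENNReal.ofReal (gradNorm f (x + t • w))) (Ici r)
    rw [restrict_Ioi_eq_restrict_Ici, ← this]
    simp
  rw [e2]
  apply lintegral_mono
  intro s
  have hd : HasDerivAt (f ∘ fun s : ℝ => x + (-s) • w)
      (fderiv ℝ f (x + (-s) • w) ((-1 : ℝ) • w)) s := by
    have hf' := (h1'.differentiable one_ne_zero (x + (-s) • w)).hasFDerivAt
    refine hf'.comp_hasDerivAt s ?_
    exact ((hasDerivAt_neg s).smul_const w).const_add x
  simp only
  rw [hd.deriv, Real.enorm_eq_ofReal_abs, aux_grad]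
  apply ENNReal.ofReal_le_ofReal
  have := (fderiv ℝ f (x + (-s) • w)).le_opNorm ((-1 : ℝ) • w)
  simpa [hw] using this

lemma aux_polar (n : ℕ) (hn : 2 ≤ n) (F : Rn n → ℝ≥0∞) (hF : Measurable F) :
    ∫⁻ y, F y = ∫⁻ w, ∫⁻ t in Ioi (0 : ℝ), ENNReal.ofReal (t ^ (n - 1)) * F (t • (w : Rn n))
      ∂volume ∂(volume : Measure (Rn n)).toSphere := by
  have : Nonempty (Fin n) := ⟨⟨0, by omega⟩⟩
  have hnt : Nontrivial (Rn n) := inferInstance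
  have hms : MeasurableSet ({0}ᶜ : Set (Rn n)) := (measurableSet_singleton _).compl
  have hG : Measurable (fun p : sphere (0 : Rn n) 1 × Ioi (0 : ℝ) => F (p.2.1 • (p.1 : Rn n))) :=
    hF.comp (by fun_prop)
  calc ∫⁻ y, F y = ∫⁻ y in ({0}ᶜ : Set (Rn n)), F y := by rw [restrict_compl_singleton]
    _ = ∫⁻ y : ({0}ᶜ : Set (Rn n)), F y ∂((volume : Measure (Rn n)).comap (↑)) := by
        rw [lintegral_subtype_comap hms]
    _ = ∫⁻ p, F (p.2.1 • (p.1 : Rn n)) ∂((volume : Measure (Rn n)).toSphere.prod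
          (Measure.volumeIoiPow (n - 1))) := by
        have h := (volume : Measure (Rn n)).measurePreserving_homeomorphUnitSphereProd.lintegral_comp hG
        rw [finrank_euclideanSpace_fin] at h
        rw [← h]
        apply lintegral_congr
        intro y
        have : ‖(y : Rn n)‖ ≠ 0 := norm_ne_zero_iff.2 y.2
        congr 1
        simp [smul_smul, this]
    _ = _ := by
        rw [lintegral_prod _ hG.aemeasurable]
        apply lintegral_congr
        intro w
        have hG' : Measurable (fun y : Ioi (0 : ℝ) => F (y.1 • (w : Rn n))) :=
          hF.comp (by fun_prop)
        change ∫⁻ y : Ioi (0 : ℝ), F (y.1 • (w : Rn n)) ∂_ = _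
        rw [Measure.volumeIoiPow, lintegral_withDensity_eq_lintegral_mul _ (by fun_prop)
          hG', ← lintegral_subtype_comap measurableSet_Ioi]
        rfl

end Aux

/-- Pointwise bound for the fractional spherical maximal operator:
`𝒮_{α-1} f(x) ≤ c_n I_α(|∇f|)(x)` for `f ∈ C_c^∞`. -/
theorem statement15 (n : ℕ) (hn : 2 ≤ n) (α : ℝ) (hα1 : 1 ≤ α) (hαn : α < n) :
    ∃ c > (0 : ℝ), ∀ f : Rn n → ℝ, IsCcSmooth f → ∀ x : Rn n,
      sphMax n (α - 1) f x ≤ ENNReal.ofReal c * rieszPot n α (gradNorm f) x := by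
  have : Nonempty (Fin n) := ⟨⟨0, by omega⟩⟩
  have hnt : Nontrivial (Rn n) := inferInstance
  set σ := (volume : Measure (Rn n)).toSphere with hσ
  have h0 : σ univ ≠ 0 := by
    rw [Ne, Measure.measure_univ_eq_zero]
    exact Measure.toSphere_ne_zero _
  have ht : σ univ ≠ ∞ := measure_ne_top _ _
  refine ⟨((σ univ)⁻¹).toReal, ENNReal.toReal_pos (ENNReal.inv_ne_zero.2 ht)
    (ENNReal.inv_ne_top.2 h0), ?_⟩
  intro f hf x
  rw [ENNReal.ofReal_toReal (ENNReal.inv_ne_top.2 h0)]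
  have hfc : ContDiff ℝ 1 f := hf.1.of_le (by exact_mod_cast le_top)
  have hgm : Measurable (gradNorm f) := by
    have : gradNorm f = fun y => ‖fderiv ℝ f y‖ := funext (aux_grad f)
    rw [this]
    exact (hfc.continuous_fderiv one_ne_zero).norm.measurable
  have huc : UniformContinuous f := hf.2.uniformContinuous_of_continuous hfc.continuous
  have hR : rieszPot n α (gradNorm f) x = ∫⁻ w, ∫⁻ t in Ioi (0 : ℝ),
      ENNReal.ofReal (t ^ (α - 1)) * ENNReal.ofReal (gradNorm f (x + t • (w : Rn n)))
      ∂volume ∂σ := by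
    rw [rieszPot, ← lintegral_add_left_eq_self _ x, aux_polar n hn _ (by fun_prop)]
    apply lintegral_congr
    intro w
    apply setLIntegral_congr_fun measurableSet_Ioi
    intro t ht
    have ht : 0 < t := ht
    have hw : ‖(w : Rn n)‖ = 1 := by simp
    have e : ‖x - (x + t • (w : Rn n))‖ = t := by
      simp [norm_smul, abs_of_pos ht]
    simp only [e]
    rw [div_eq_mul_inv, mul_comm (ENNReal.ofReal (gradNorm f _)), ← mul_assoc,
      ← ENNReal.ofReal_inv_of_pos (by positivity), ← ENNReal.ofReal_mul (by positivity)]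
    congr 2
    rw [← Real.rpow_neg ht.le, ← Real.rpow_natCast, ← Real.rpow_add ht]
    congr 1
    rw [Nat.cast_sub (by omega)]
    push_cast
    ring
  rw [sphMax, hR]
  refine iSup₂_le fun r hr => ?_
  calc _ ≤ ENNReal.ofReal (r ^ (α - 1)) * ((σ univ)⁻¹ *
        ∫⁻ w, ENNReal.ofReal |f (x + r • (w : Rn n))| ∂σ) := by
        exact mul_le_mul_right (aux_avg n hn _ x r hr f huc) _
    _ = (σ univ)⁻¹ * ∫⁻ w, ENNReal.ofReal (r ^ (α - 1)) *
          ENNReal.ofReal |f (x + r • (w : Rn n))| ∂σ := by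
        have hcont := hfc.continuous
        rw [lintegral_const_mul _ (by
          apply Measurable.ennreal_ofReal
          apply Continuous.measurable
          fun_prop)]
        ring
    _ ≤ _ := by
        gcongr with w
        have hw : ‖(w : Rn n)‖ = 1 := by simp
        have hm : Measurable fun t : ℝ => ENNReal.ofReal (gradNorm f (x + t • (w : Rn n))) := by
          fun_prop
        calc _ ≤ ENNReal.ofReal (r ^ (α - 1)) * ∫⁻ t in Ioi r,
              ENNReal.ofReal (gradNorm f (x + t • (w : Rn n))) := by
              gcongr
              exact aux_ray f hf x w hw r
          _ = ∫⁻ t in Ioi r, ENNReal.ofReal (r ^ (α - 1)) *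
              ENNReal.ofReal (gradNorm f (x + t • (w : Rn n))) := by
              rw [lintegral_const_mul _ hm]
          _ ≤ ∫⁻ t in Ioi r, ENNReal.ofReal (t ^ (α - 1)) *
              ENNReal.ofReal (gradNorm f (x + t • (w : Rn n))) := by
              apply setLIntegral_mono' measurableSet_Ioi
              intro t ht
              have ht : r < t := ht
              gcongr
          _ ≤ _ := lintegral_mono_set (Ioi_subset_Ioi hr.le)

end
end

section
/- Let n ≥ 2 and 1 ≤ α < n. (i) For 1 < p < n/α and 1/q = 1/p − α/n there is C such that ‖𝒮_{α−1} f‖_{L^q(ℝ^n)} ≤ C ‖∇f‖_{L^p(ℝ^n)} for all f ∈ C_c^∞(ℝ^n). (ii) At the endpoint p = 1, there is C such that ‖𝒮_{α−1} f‖_{L^{n/(n−α),∞}(ℝ^n)} ≤ C ‖∇f‖_{L^1(ℝ^n)} for all f ∈ C_c^∞(ℝ^n). -/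
open MeasureTheory Metric Set Filter
open scoped ENNReal NNReal Topology

noncomputable section

lemma aux_nontrivial {n : ℕ} (hn : 2 ≤ n) : Nontrivial (Rn n) := by
  have : Nonempty (Fin n) := ⟨⟨0, by omega⟩⟩
  infer_instance

abbrev tauS (n : ℕ) : Measure (sphere (0 : Rn n) 1) := (volume : Measure (Rn n)).toSphere

lemma polar {n : ℕ} (hn : 2 ≤ n) (F : Rn n → ℝ≥0∞) (hF : Measurable F) :
    ∫⁻ y, F y = ∫⁻ θ : sphere (0 : Rn n) 1, (∫⁻ s in Ioi (0:ℝ),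
      ENNReal.ofReal (s ^ (n - 1)) * F (s • (θ : Rn n))) ∂(tauS n) := by
  have := aux_nontrivial hn
  have mp := (volume : Measure (Rn n)).measurePreserving_homeomorphUnitSphereProd
  rw [finrank_euclideanSpace_fin] at mp
  have h1 : ∫⁻ y, F y = ∫⁻ y : ({(0 : Rn n)}ᶜ : Set (Rn n)), F y ∂(volume.comap Subtype.val) := by
    rw [lintegral_subtype_comap (measurableSet_singleton _).compl F, restrict_compl_singleton]
  have hG : Measurable (fun z : sphere (0 : Rn n) 1 × Ioi (0:ℝ) => F ((z.2 : ℝ) • (z.1 : Rn n))) := by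
    apply hF.comp
    fun_prop
  have h2 := mp.lintegral_comp hG
  rw [h1]
  have h3 : ∀ y : ({(0 : Rn n)}ᶜ : Set (Rn n)), 
      F ((((homeomorphUnitSphereProd (Rn n) y).2 : ℝ)) • ((homeomorphUnitSphereProd (Rn n) y).1 : Rn n)) = F y := by
    intro y
    have h0 : ‖(y : Rn n)‖ ≠ 0 := norm_ne_zero_iff.2 y.2
    simp [smul_smul, h0]
  simp only [h3] at h2
  rw [h2, lintegral_prod _ hG.aemeasurable]
  apply lintegral_congr
  intro θ
  have hG' : Measurable (fun y : Ioi (0:ℝ) => F ((y : ℝ) • (θ : Rn n))) :=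
    hG.comp (measurable_prodMk_left (x := θ))
  dsimp only
  rw [Measure.volumeIoiPow, lintegral_withDensity_eq_lintegral_mul _ (by fun_prop) hG']
  exact lintegral_subtype_comap measurableSet_Ioi
    (fun s : ℝ => ENNReal.ofReal (s ^ (n - 1)) * F (s • (θ : Rn n)))

lemma polar_radial {n : ℕ} (hn : 2 ≤ n) (φ : ℝ → ℝ≥0∞) (hφ : Measurable φ) :
    ∫⁻ y : Rn n, φ ‖y‖ = tauS n univ * ∫⁻ s in Ioi (0:ℝ), ENNReal.ofReal (s ^ (n - 1)) * φ s := by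
  rw [polar hn _ (by fun_prop)]
  have : ∀ θ : sphere (0 : Rn n) 1, ∫⁻ s in Ioi (0:ℝ),
      ENNReal.ofReal (s ^ (n - 1)) * φ ‖s • (θ : Rn n)‖ = ∫⁻ s in Ioi (0:ℝ), ENNReal.ofReal (s ^ (n - 1)) * φ s := by
    intro θ
    apply setLIntegral_congr_fun measurableSet_Ioi
    intro s hs
    simp only [norm_smul, Real.norm_eq_abs, abs_of_pos (mem_Ioi.1 hs), norm_eq_of_mem_sphere, mul_one]
  simp only [this, lintegral_const, mul_comm]

lemma tau_ne_zero {n : ℕ} (hn : 2 ≤ n) : tauS n univ ≠ 0 := by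
  have := aux_nontrivial hn
  rw [Ne, Measure.measure_univ_eq_zero]
  exact Measure.toSphere_ne_zero _

/-- polar bound used for the pointwise estimate -/
lemma polar_bound {n : ℕ} (hn : 2 ≤ n) (α : ℝ) (hα : 1 ≤ α) (G : Rn n → ℝ≥0∞) (hG : Measurable G)
    (x : Rn n) (r : ℝ) (hr : 0 < r) :
    ENNReal.ofReal (r ^ (α - 1)) * ∫⁻ θ : sphere (0 : Rn n) 1, (∫⁻ s in Ioi r, G (x + s • (θ : Rn n))) ∂(tauS n)
      ≤ ∫⁻ y, ENNReal.ofReal (‖y‖ ^ (α - n)) * G (x + y) := by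
  rw [polar hn _ (by fun_prop), ← lintegral_const_mul']
  swap; · exact ENNReal.ofReal_ne_top
  apply lintegral_mono
  intro θ
  dsimp only
  rw [← lintegral_const_mul' _ _ ENNReal.ofReal_ne_top]
  refine le_trans ?_ (lintegral_mono_set (Ioi_subset_Ioi hr.le))
  apply setLIntegral_mono' measurableSet_Ioi
  intro s hs
  have hs' : r < s := hs
  have h0 : 0 < s := hr.trans hs
  rw [← mul_assoc, norm_smul, norm_eq_of_mem_sphere, mul_one, Real.norm_eq_abs, abs_of_pos h0,
    ← ENNReal.ofReal_mul (by positivity), ← Real.rpow_natCast, ← Real.rpow_add h0]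
  gcongr
  have : ((n - 1 : ℕ) : ℝ) + (α - n) = α - 1 := by
    rw [Nat.cast_sub (by omega)]; push_cast; ring
  rw [this]
  exact Real.rpow_le_rpow hr.le hs'.le (by linarith)

lemma ftc {n : ℕ} (f : Rn n → ℝ) (hf : ContDiff ℝ (⊤ : ℕ∞) f) (hc : HasCompactSupport f) (x θ : Rn n)
    (hθ : ‖θ‖ = 1) (r : ℝ) : ENNReal.ofReal |f (x + r • θ)| ≤
      ∫⁻ s in Ioi r, ENNReal.ofReal ‖gradient f (x + s • θ)‖ := by
  let g : ℝ → ℝ := fun t => f (x + (-t) • θ)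
  have hg : ContDiff ℝ 1 g := by
    have : ContDiff ℝ 1 f := hf.of_le (by exact_mod_cast le_top)
    apply this.comp
    fun_prop
  have hemb : Topology.IsClosedEmbedding (fun t : ℝ => x + (-t) • θ) := by
    have : Isometry (fun t : ℝ => x + (-t) • θ) := by
      apply Isometry.of_dist_eq
      intro a b
      rw [dist_add_left, dist_eq_norm, ← sub_smul, norm_smul, hθ, mul_one, Real.dist_eq, Real.norm_eq_abs, abs_sub_comm]
      congr 1; ring
    exact this.isClosedEmbedding
  have hgc : HasCompactSupport g := hc.comp_isClosedEmbedding hemb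
  have h := HasCompactSupport.enorm_le_lintegral_Ici_deriv hg hgc (-r)
  have e1 : ‖g (-r)‖ₑ = ENNReal.ofReal |f (x + r • θ)| := by
    simp [g, Real.enorm_eq_ofReal_abs]
  rw [e1] at h
  refine h.trans ?_
  have e2 : ∫⁻ y in Iic (-r), ‖deriv g y‖ₑ = ∫⁻ s in Ioi r, ‖deriv g (-s)‖ₑ := by
    have mp : MeasurePreserving (fun s : ℝ => -s) volume volume := Measure.measurePreserving_neg volume
    have := mp.setLIntegral_comp_preimage_emb (MeasurableEquiv.neg ℝ).measurableEmbedding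
      (fun y => ‖deriv g y‖ₑ) (Iic (-r))
    rw [← this]
    have : (fun s : ℝ => -s) ⁻¹' (Iic (-r)) = Ici r := by ext; simp
    rw [this]
    exact (setLIntegral_congr Ioi_ae_eq_Ici).symm
  rw [e2]
  apply lintegral_mono
  intro s
  dsimp only
  have hd : HasDerivAt g (fderiv ℝ f (x + s • θ) (-θ)) (-s) := by
    have h1 : HasDerivAt (fun t : ℝ => x + (-t) • θ) (-θ) (-s) := by
      have := ((hasDerivAt_id (-s)).neg.smul_const θ).const_add x
      simpa using this
    have h2 : HasFDerivAt f (fderiv ℝ f (x + s • θ)) (x + (-(-s)) • θ) := by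
      rw [neg_neg]
      exact (hf.differentiable (by simp)).differentiableAt.hasFDerivAt
    exact h2.comp_hasDerivAt (-s) h1
  rw [hd.deriv, ← ofReal_norm]
  apply ENNReal.ofReal_le_ofReal
  calc _ ≤ ‖fderiv ℝ f (x + s • θ)‖ * ‖-θ‖ := ContinuousLinearMap.le_opNorm _ _
    _ = ‖gradient f (x + s • θ)‖ := by
      rw [norm_neg, hθ, mul_one, gradient, LinearIsometryEquiv.norm_map]


lemma unif_pos {X : Type*} [MetricSpace X] [MeasurableSpace X] [BorelSpace X]
    (τ : Measure X) (S : Set X) (hS : IsCompact S) (hτS : τ Sᶜ = 0) (h0 : τ univ ≠ 0)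
    (ε : ℝ) (hε : 0 < ε) (l : ℝ≥0∞) (hl : ∀ y ∈ S, τ (closedBall y ε) = l) : l ≠ 0 := by
  rintro rfl
  apply h0
  obtain ⟨t, htS, htf, ht⟩ := hS.finite_cover_balls hε
  have h1 : τ S = 0 := by
    refine measure_mono_null ht ?_
    rw [measure_biUnion_null_iff htf.countable]
    intro y hy
    exact measure_mono_null ball_subset_closedBall (hl y (htS hy))
  rw [← union_compl_self S]
  exact measure_union_null h1 hτS

lemma unif_unique {X : Type*} [MetricSpace X] [SecondCountableTopology X] [MeasurableSpace X]
    [BorelSpace X] (σ τ : Measure X) [IsFiniteMeasure σ] [IsFiniteMeasure τ] (S : Set X) (hS : IsCompact S)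
    (hσS : σ Sᶜ = 0) (hτS : τ Sᶜ = 0) (hσ0 : σ univ ≠ 0) (hτ0 : τ univ ≠ 0)
    (hσ : ∀ ε > 0, ∀ y ∈ S, ∀ z ∈ S, σ (closedBall y ε) = σ (closedBall z ε))
    (hτ : ∀ ε > 0, ∀ y ∈ S, ∀ z ∈ S, τ (closedBall y ε) = τ (closedBall z ε))
    (h : X → ℝ) (hh : UniformContinuous h) :
    (σ univ)⁻¹ * ∫⁻ y, ENNReal.ofReal (h y) ∂σ ≤ (τ univ)⁻¹ * ∫⁻ y, ENNReal.ofReal (h y) ∂τ := by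
  obtain ⟨z, hz⟩ : S.Nonempty := by
    by_contra hne
    rw [not_nonempty_iff_eq_empty] at hne
    subst hne
    simp at hσS
    simp [hσS] at hσ0
  have hm := hh.continuous.measurable
  apply ENNReal.le_of_forall_pos_le_add
  intro δ hδ _
  obtain ⟨ε', hε', hu⟩ := Metric.uniformContinuous_iff.1 hh δ (by exact_mod_cast hδ)
  set ε := ε' / 2 with hεd
  have hε : 0 < ε := by positivity
  set k := σ (closedBall z ε) with hk
  set l := τ (closedBall z ε) with hl
  have hl0 : l ≠ 0 := unif_pos τ S hS hτS hτ0 ε hε l (fun y hy => hτ ε hε y hy z hz)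
  have hk0 : k ≠ 0 := unif_pos σ S hS hσS hσ0 ε hε k (fun y hy => hσ ε hε y hy z hz)
  have hlt : l ≠ ∞ := measure_ne_top _ _
  have hkt : k ≠ ∞ := measure_ne_top _ _
  have hσae : ∀ᵐ y ∂σ, y ∈ S := hσS
  have hτae : ∀ᵐ y ∂τ, y ∈ S := hτS
  let D : Set (X × X) := {w | dist w.1 w.2 ≤ ε}
  have hD : MeasurableSet D := (isClosed_le (by fun_prop) (by fun_prop)).measurableSet
  have key : ∀ (u v : X → ℝ≥0∞), Measurable u → Measurable v →
      (∀ x y, dist x y ≤ ε → u x ≤ v y) → l * ∫⁻ x, u x ∂σ ≤ k * ∫⁻ y, v y ∂τ := by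
    intro u v hum hvm huv
    have e1 : l * ∫⁻ x, u x ∂σ = ∫⁻ x, ∫⁻ y, D.indicator (fun w => u w.1) (x, y) ∂τ ∂σ := by
      rw [← lintegral_const_mul' _ _ hlt]
      apply lintegral_congr_ae
      filter_upwards [hσae] with x hx
      have : ∀ y, D.indicator (fun w : X × X => u w.1) (x, y) = (closedBall x ε).indicator (fun _ => u x) y := by
        intro y
        simp only [indicator, D, mem_ofPred_eq, mem_closedBall, dist_comm]
      simp only [this]
      rw [lintegral_indicator_const measurableSet_closedBall, hτ ε hε x hx z hz, mul_comm]
    have e2 : k * ∫⁻ x, v x ∂τ = ∫⁻ y, ∫⁻ x, D.indicator (fun w => v w.2) (x, y) ∂σ ∂τ := by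
      rw [← lintegral_const_mul' _ _ hkt]
      apply lintegral_congr_ae
      filter_upwards [hτae] with x hx
      have : ∀ y, D.indicator (fun w : X × X => v w.2) (y, x) = (closedBall x ε).indicator (fun _ => v x) y := by
        intro y
        simp only [indicator, D, mem_ofPred_eq, mem_closedBall]
      simp only [this]
      rw [lintegral_indicator_const measurableSet_closedBall, hσ ε hε x hx z hz, mul_comm]
    rw [e1, e2, lintegral_lintegral_swap]
    · apply lintegral_mono; intro y; apply lintegral_mono; intro x
      apply indicator_le_indicator' 
      intro hxy
      exact huv _ _ hxy
    · exact ((hum.comp measurable_fst).indicator hD).aemeasurable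
  have k1 : l * σ univ ≤ k * τ univ := by
    simpa using key (fun _ => 1) (fun _ => 1) measurable_const measurable_const (fun _ _ _ => le_rfl)
  have k1' : k * τ univ ≤ l * σ univ := by
    have e1 : k * τ univ = ∫⁻ x, σ (closedBall x ε) ∂τ := by
      rw [lintegral_congr_ae (g := fun _ => k), lintegral_const]
      filter_upwards [hτae] with x hx using hσ ε hε x hx z hz
    have e2 : l * σ univ = ∫⁻ x, τ (closedBall x ε) ∂σ := by
      rw [lintegral_congr_ae (g := fun _ => l), lintegral_const]
      filter_upwards [hσae] with x hx using hτ ε hε x hx z hz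
    have e3 : (τ.prod σ) D = ∫⁻ x, σ (closedBall x ε) ∂τ := by
      rw [Measure.prod_apply hD]
      apply lintegral_congr; intro x; congr 1; ext y; simp [D, dist_comm]
    have e4 : (τ.prod σ) D = ∫⁻ x, τ (closedBall x ε) ∂σ := by
      rw [Measure.prod_apply_symm hD]
      apply lintegral_congr; intro x; congr 1
    rw [e1, e2, ← e3, ← e4]
  have k2 := key (fun x => ENNReal.ofReal (h x)) (fun x => ENNReal.ofReal (h x) + δ) (by fun_prop) (by fun_prop)
    (by
      intro x y hxy
      have := hu (a := x) (b := y) (by linarith)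
      rw [Real.dist_eq] at this
      have : h x ≤ h y + δ := by linarith [le_abs_self (h x - h y)]
      calc _ ≤ ENNReal.ofReal (h y + δ) := ENNReal.ofReal_le_ofReal this
        _ ≤ _ := ENNReal.ofReal_add_le
        _ = _ := by simp)
  have k3 : l * σ univ = k * τ univ := le_antisymm k1 k1'
  rw [lintegral_add_right _ measurable_const, lintegral_const] at k2
  have hσt : σ univ ≠ ∞ := measure_ne_top _ _
  have hτt : τ univ ≠ ∞ := measure_ne_top _ _
  generalize ∫⁻ x, ENNReal.ofReal (h x) ∂σ = A at *
  generalize ∫⁻ x, ENNReal.ofReal (h x) ∂τ = B at *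
  have a1 : (σ univ)⁻¹ * A = (l * σ univ)⁻¹ * (l * A) := by
    rw [ENNReal.mul_inv (Or.inl hl0) (Or.inl hlt)]
    calc (σ univ)⁻¹ * A = (l⁻¹ * l) * ((σ univ)⁻¹ * A) := by rw [ENNReal.inv_mul_cancel hl0 hlt, one_mul]
      _ = _ := by ring
  have a2 : (k * τ univ)⁻¹ * (k * (B + δ * τ univ)) = (τ univ)⁻¹ * B + δ := by
    rw [ENNReal.mul_inv (Or.inl hk0) (Or.inl hkt)]
    calc _ = (k⁻¹ * k) * ((τ univ)⁻¹ * B + ((τ univ)⁻¹ * τ univ) * δ) := by ring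
      _ = _ := by rw [ENNReal.inv_mul_cancel hk0 hkt, ENNReal.inv_mul_cancel hτ0 hτt]; simp
  rw [a1, ← a2, k3]
  gcongr

lemma exists_rot {n : ℕ} (v w : Rn n) (h : ‖v‖ = ‖w‖) : ∃ R : Rn n ≃ₗᵢ[ℝ] Rn n, R v = w :=
  ⟨_, Submodule.reflection_sub h⟩

open scoped Pointwise in
lemma sphere_avg {n : ℕ} (hn : 2 ≤ n) (x : Rn n) (r : ℝ) (hr : 0 < r) (h : Rn n → ℝ)
    (hh : UniformContinuous h) :
    (Measure.hausdorffMeasure ((n : ℝ) - 1) (sphere x r))⁻¹ *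
        ∫⁻ y in sphere x r, ENNReal.ofReal (h y) ∂(Measure.hausdorffMeasure ((n : ℝ) - 1)) ≤
    (tauS n univ)⁻¹ * ∫⁻ θ : sphere (0 : Rn n) 1, ENNReal.ofReal (h (x + r • (θ : Rn n))) ∂(tauS n) := by
  set μ : Measure (Rn n) := Measure.hausdorffMeasure ((n : ℝ) - 1) with hμ
  by_cases h0 : μ (sphere x r) = 0
  · rw [Measure.restrict_eq_zero.2 h0]; simp
  by_cases ht : μ (sphere x r) = ∞
  · rw [ht]; simp
  set σ := μ.restrict (sphere x r) with hσd
  have : IsFiniteMeasure σ := ⟨by simpa [hσd] using lt_top_iff_ne_top.2 ht⟩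
  let Φ : sphere (0 : Rn n) 1 → Rn n := fun θ => x + r • (θ : Rn n)
  have hΦ : Measurable Φ := by fun_prop
  set τ := (tauS n).map Φ with hτd
  have hΦS : ∀ θ, Φ θ ∈ sphere x r := by
    intro θ
    simp [Φ, norm_smul, abs_of_pos hr]
  have hτu : τ univ = tauS n univ := by rw [hτd, Measure.map_apply hΦ .univ, preimage_univ]
  have hσu : σ univ = μ (sphere x r) := by simp [hσd]
  have hS : MeasurableSet (sphere x r) := isClosed_sphere.measurableSet
  have hrot : ∀ y ∈ sphere x r, ∀ z ∈ sphere x r, ∃ R : Rn n ≃ₗᵢ[ℝ] Rn n, R (y - x) = z - x := by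
    intro y hy z hz
    apply exists_rot
    rw [mem_sphere, dist_eq_norm] at hy hz
    rw [hy, hz]
  have main := unif_unique σ τ (sphere x r) (isCompact_sphere x r) ?_ ?_ ?_ ?_ ?_ ?_ h hh
  · rw [hσu, hτu] at main
    refine main.trans_eq ?_
    congr 1
    rw [hτd, lintegral_map (by have := hh.continuous.measurable; fun_prop) hΦ]
  · rw [hσd, Measure.restrict_apply hS.compl]; simp
  · rw [hτd, Measure.map_apply hΦ hS.compl]
    have : Φ ⁻¹' (sphere x r)ᶜ = ∅ := by
      ext θ; simpa using hΦS θ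
    rw [this, measure_empty]
  · rwa [hσu]
  · rw [hτu]; exact tau_ne_zero hn
  · intro ε hε y hy z hz
    obtain ⟨R, hR⟩ := hrot y hy z hz
    let T : Rn n ≃ᵢ Rn n := ((IsometryEquiv.subRight x).trans R.toIsometryEquiv).trans (IsometryEquiv.addRight x)
    have hT : ∀ w, T w = R (w - x) + x := fun w => rfl
    have hTy : T y = z := by rw [hT, hR]; simp
    have hTx : T x = x := by rw [hT]; simp
    rw [hσd, Measure.restrict_apply measurableSet_closedBall, Measure.restrict_apply measurableSet_closedBall]
    have : T '' (closedBall y ε ∩ sphere x r) = closedBall z ε ∩ sphere x r := by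
      rw [image_inter T.injective, T.image_closedBall, T.image_sphere, hTy, hTx]
    rw [← this, hμ, T.hausdorffMeasure_image]
  · intro ε hε y hy z hz
    obtain ⟨R, hR⟩ := hrot y hy z hz
    rw [hτd, Measure.map_apply hΦ measurableSet_closedBall, Measure.map_apply hΦ measurableSet_closedBall,
      Measure.toSphere_apply' _ (hΦ measurableSet_closedBall), Measure.toSphere_apply' _ (hΦ measurableSet_closedBall)]
    congr 1
    have hc : ∀ y, Ioo (0:ℝ) 1 • (Subtype.val '' (Φ ⁻¹' closedBall y ε)) =
        {w : Rn n | ∃ t ∈ Ioo (0:ℝ) 1, ∃ θ : Rn n, ‖θ‖ = 1 ∧ ‖r • θ - (y - x)‖ ≤ ε ∧ t • θ = w} := by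
      intro y
      ext w
      rw [Set.mem_smul]
      constructor
      · rintro ⟨t, ht, _, ⟨θ, hθ, rfl⟩, rfl⟩
        refine ⟨t, ht, θ, by simp, ?_, rfl⟩
        simp only [Φ, mem_preimage, mem_closedBall, dist_eq_norm] at hθ
        rwa [show r • (θ : Rn n) - (y - x) = x + r • (θ : Rn n) - y by abel]
      · rintro ⟨t, ht, θ, h1, h2, rfl⟩
        refine ⟨t, ht, θ, ⟨⟨θ, by simpa using h1⟩, ?_, rfl⟩, rfl⟩
        simp only [Φ, mem_preimage, mem_closedBall, dist_eq_norm]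
        rwa [show x + r • θ - y = r • θ - (y - x) by abel]
    rw [hc, hc]
    have hp := R.measurePreserving.measure_preimage_equiv (f := R.toMeasurableEquiv)
       {w : Rn n | ∃ t ∈ Ioo (0:ℝ) 1, ∃ θ : Rn n, ‖θ‖ = 1 ∧ ‖r • θ - (z - x)‖ ≤ ε ∧ t • θ = w}
    rw [← hp]
    congr 1
    ext w
    simp only [mem_ofPred_eq, mem_preimage]
    constructor
    · rintro ⟨t, ht, θ, h1, h2, rfl⟩
      refine ⟨t, ht, R θ, by simpa using h1, ?_, ?_⟩
      · rw [← hR, ← map_smul, ← map_sub, R.norm_map]; exact h2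
      · exact (map_smul R t θ).symm
    · rintro ⟨t, ht, θ, h1, h2, h3⟩
      refine ⟨t, ht, R.symm θ, by simpa using h1, ?_, ?_⟩
      · rw [← R.norm_map, map_sub, map_smul, R.apply_symm_apply, hR]; exact h2
      · rw [← map_smul, h3]; exact R.symm_apply_apply w

lemma int_rpow_zero (e Λ : ℝ) (he : 0 < e) (hΛ : 0 ≤ Λ) :
    ∫⁻ s in Ioc (0:ℝ) Λ, ENNReal.ofReal (s ^ (e - 1)) = ENNReal.ofReal (Λ ^ e / e) := by
  rw [← ofReal_integral_eq_lintegral_ofReal]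
  · rw [← intervalIntegral.integral_of_le hΛ, integral_rpow (Or.inl (by linarith))]
    rw [sub_add_cancel, Real.zero_rpow he.ne', sub_zero]
  · exact (intervalIntegral.intervalIntegrable_rpow' (by linarith)).1
  · filter_upwards [ae_restrict_mem measurableSet_Ioc] with s hs
    exact Real.rpow_nonneg hs.1.le _

lemma int_rpow_top (e R : ℝ) (he : 0 < e) (hR : 0 < R) :
    ∫⁻ s in Ioi R, ENNReal.ofReal (s ^ (-e - 1)) = ENNReal.ofReal (R ^ (-e) / e) := by
  rw [← ofReal_integral_eq_lintegral_ofReal]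
  · rw [integral_Ioi_rpow_of_lt (by linarith) hR]
    congr 1
    rw [sub_add_cancel]; field_simp
  · exact integrableOn_Ioi_rpow_of_lt (by linarith) hR
  · filter_upwards [ae_restrict_mem measurableSet_Ioi] with s hs
    exact Real.rpow_nonneg (hR.trans hs).le _

/-- the Riesz kernel -/
def rK (n : ℕ) (α : ℝ) (y : Rn n) : ℝ≥0∞ := ENNReal.ofReal (‖y‖ ^ (α - n))

lemma rK_meas (n : ℕ) (α : ℝ) : Measurable (rK n α) := by
  unfold rK; fun_prop

lemma near_int {n : ℕ} (hn : 2 ≤ n) (α : ℝ) (hα : 0 < α) (R : ℝ) (hR : 0 < R) :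
    ∫⁻ y in closedBall (0 : Rn n) R, rK n α y = tauS n univ * ENNReal.ofReal (R ^ α / α) := by
  have h1 : ∫⁻ y in closedBall (0 : Rn n) R, rK n α y =
      ∫⁻ y : Rn n, (Iic R).indicator (fun s : ℝ => ENNReal.ofReal (s ^ (α - n))) ‖y‖ := by
    rw [← lintegral_indicator measurableSet_closedBall]
    apply lintegral_congr
    intro y
    simp [indicator, rK]
  rw [h1, polar_radial hn _ ((by fun_prop : Measurable _).indicator measurableSet_Iic)]
  congr 1
  rw [← int_rpow_zero α R hα hR.le, ← lintegral_indicator measurableSet_Ioi,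
    ← lintegral_indicator measurableSet_Ioc]
  apply lintegral_congr
  intro s
  by_cases h0 : 0 < s
  · by_cases h1 : s ≤ R
    · simp only [indicator, mem_Ioi, h0, h1, mem_Iic, mem_Ioc, if_true, and_self]
      rw [← ENNReal.ofReal_mul (by positivity), ← Real.rpow_natCast, ← Real.rpow_add h0,
        Nat.cast_sub (by omega)]
      congr 2; push_cast; ring
    · simp [indicator, h1]
  · simp [indicator, h0]

lemma far_int {n : ℕ} (hn : 2 ≤ n) (b : ℝ) (hb : n < b) (R : ℝ) (hR : 0 < R) :
    ∫⁻ y in (closedBall (0 : Rn n) R)ᶜ, ENNReal.ofReal (‖y‖ ^ (-b)) =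
      tauS n univ * ENNReal.ofReal (R ^ (-(b - n)) / (b - n)) := by
  have h1 : ∫⁻ y in (closedBall (0 : Rn n) R)ᶜ, ENNReal.ofReal (‖y‖ ^ (-b)) =
      ∫⁻ y : Rn n, (Ioi R).indicator (fun s : ℝ => ENNReal.ofReal (s ^ (-b))) ‖y‖ := by
    rw [← lintegral_indicator measurableSet_closedBall.compl]
    apply lintegral_congr
    intro y
    simp [indicator]
  rw [h1, polar_radial hn _ ((by fun_prop : Measurable _).indicator measurableSet_Ioi)]
  congr 1
  rw [← int_rpow_top (b - n) R (by linarith) hR, ← lintegral_indicator measurableSet_Ioi,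
    ← lintegral_indicator measurableSet_Ioi]
  apply lintegral_congr
  intro s
  by_cases h1 : R < s
  · have h0 : 0 < s := hR.trans h1
    simp only [indicator, mem_Ioi, h0, h1, if_true]
    rw [← ENNReal.ofReal_mul (by positivity), ← Real.rpow_natCast, ← Real.rpow_add h0,
        Nat.cast_sub (by omega)]
    congr 2; push_cast; ring
  · simp [indicator, h1]

/-- near and far parts, and full Riesz potential -/
def rNear (n : ℕ) (α R : ℝ) (g : Rn n → ℝ≥0∞) (x : Rn n) : ℝ≥0∞ :=
  ∫⁻ y in closedBall (0 : Rn n) R, rK n α y * g (x + y)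
def rFar (n : ℕ) (α R : ℝ) (g : Rn n → ℝ≥0∞) (x : Rn n) : ℝ≥0∞ :=
  ∫⁻ y in (closedBall (0 : Rn n) R)ᶜ, rK n α y * g (x + y)
def rz (n : ℕ) (α : ℝ) (g : Rn n → ℝ≥0∞) (x : Rn n) : ℝ≥0∞ :=
  ∫⁻ y, rK n α y * g (x + y)

lemma rz_split (n : ℕ) (α R : ℝ) (g : Rn n → ℝ≥0∞) (x : Rn n) :
    rz n α g x = rNear n α R g x + rFar n α R g x :=
  (lintegral_add_compl _ measurableSet_closedBall).symm

lemma rz_meas (n : ℕ) (α : ℝ) (g : Rn n → ℝ≥0∞) (hg : Measurable g) : Measurable (rz n α g) := by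
  unfold rz
  have := rK_meas n α
  apply Measurable.lintegral_prod_right' (f := fun z : Rn n × Rn n => rK n α z.2 * g (z.1 + z.2))
  fun_prop

lemma rNear_int {n : ℕ} (α R : ℝ) (g : Rn n → ℝ≥0∞) (hg : Measurable g) :
    ∫⁻ x, rNear n α R g x = (∫⁻ y in closedBall (0 : Rn n) R, rK n α y) * ∫⁻ x, g x := by
  have := rK_meas n α
  unfold rNear
  rw [lintegral_lintegral_swap (by fun_prop), ← lintegral_mul_const _ this]
  apply lintegral_congr
  intro y
  rw [lintegral_const_mul _ (by fun_prop), lintegral_add_right_eq_self g y]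

lemma rNear_bdd {n : ℕ} (α R : ℝ) (g : Rn n → ℝ≥0∞) (M : ℝ≥0∞) (hM : ∀ x, g x ≤ M)  (x : Rn n) :
    rNear n α R g x ≤ (∫⁻ y in closedBall (0 : Rn n) R, rK n α y) * M := by
  rw [← lintegral_mul_const _ (rK_meas n α)]
  unfold rNear
  gcongr
  exact hM _

lemma rFar_L1 {n : ℕ} (α R : ℝ) (hα : α < n) (hR : 0 < R) (g : Rn n → ℝ≥0∞) (x : Rn n) :
    rFar n α R g x ≤ ENNReal.ofReal (R ^ (α - n)) * ∫⁻ y, g y := by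
  calc rFar n α R g x ≤ ∫⁻ y in (closedBall (0 : Rn n) R)ᶜ, ENNReal.ofReal (R ^ (α - n)) * g (x + y) := by
        apply setLIntegral_mono' measurableSet_closedBall.compl
        intro y hy
        have : R < ‖y‖ := by simpa using hy
        unfold rK
        gcongr ENNReal.ofReal ?_ * _
        exact Real.rpow_le_rpow_of_nonpos hR this.le (by linarith)
    _ ≤ ∫⁻ y, ENNReal.ofReal (R ^ (α - n)) * g (x + y) := setLIntegral_le_lintegral _ _
    _ = _ := by
        rw [lintegral_const_mul' _ _ ENNReal.ofReal_ne_top, lintegral_add_left_eq_self g x]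

lemma rFar_Lp {n : ℕ} (hn : 2 ≤ n) (α p q : ℝ) (hα : 0 < α) (hαn : α < n) (hp : 1 < p) (hpn : p < n / α)
    (hq : 1 / q = 1 / p - α / n) :
    ∃ c : ℝ, 0 < c ∧ ∀ R > 0, ∀ g : Rn n → ℝ≥0∞, Measurable g → ∫⁻ y, g y ^ p ≤ 1 →
      ∀ x, rFar n α R g x ≤ ENNReal.ofReal (c * R ^ (-(n / q))) := by
  have hn0 : (0:ℝ) < n := by positivity
  have hconj := Real.HolderConjugate.conjExponent hp
  set p' := Real.conjExponent p with hp'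
  have hp'0 : 0 < p' := hconj.symm.pos
  have hpc : 1 / p + 1 / p' = 1 := by simpa using hconj.inv_add_inv_eq_one
  have hb : (n : ℝ) < (n - α) * p' := by
    have h1 : α * p < n := by rwa [lt_div_iff₀ hα, mul_comm] at hpn
    have h2 : 1 / p' = 1 - 1 / p := by linarith
    have h3 : (n:ℝ) * (1 / p') < n - α := by
      rw [h2]
      have : α < n / p := by rw [lt_div_iff₀ (by linarith)]; exact h1
      have e : (n:ℝ) * (1 - 1 / p) = n - n / p := by ring
      rw [e]; linarith
    rwa [mul_one_div, div_lt_iff₀ hp'0] at h3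
  set b := (n - α) * p' with hbd
  set T := (tauS n univ).toReal with hT
  have hTe : tauS n univ = ENNReal.ofReal T := (ENNReal.ofReal_toReal (measure_ne_top _ _)).symm
  have hT0 : 0 < T := ENNReal.toReal_pos (tau_ne_zero hn) (measure_ne_top _ _)
  refine ⟨(T / (b - n)) ^ (1 / p'), by have : 0 < b - n := by linarith
                                       positivity, ?_⟩
  intro R hR g hg hg1 x
  have H := ENNReal.lintegral_mul_le_Lp_mul_Lq (volume.restrict (closedBall (0 : Rn n) R)ᶜ) hconj.symm
    (f := rK n α) (g := fun y => g (x + y)) (rK_meas n α).aemeasurable (by fun_prop)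
  refine H.trans ?_
  have e1 : ∫⁻ y in (closedBall (0 : Rn n) R)ᶜ, rK n α y ^ p' =
      ENNReal.ofReal (T * (R ^ (-(b - n)) / (b - n))) := by
    rw [ENNReal.ofReal_mul hT0.le, ← hTe, ← far_int hn b hb R hR]
    apply lintegral_congr
    intro y
    rw [rK, ENNReal.ofReal_rpow_of_nonneg (by positivity) hp'0.le, ← Real.rpow_mul (norm_nonneg _)]
    congr 2; rw [hbd]; ring
  have e2 : ∫⁻ y in (closedBall (0 : Rn n) R)ᶜ, g (x + y) ^ p ≤ 1 := by
    refine (setLIntegral_le_lintegral _ _).trans ?_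
    rw [lintegral_add_left_eq_self (fun y => g y ^ p) x]; exact hg1
  rw [e1]
  have hbn : 0 < b - n := by linarith
  calc _ ≤ ENNReal.ofReal (T * (R ^ (-(b - n)) / (b - n))) ^ (1 / p') * 1 := by
        gcongr
        exact ENNReal.rpow_le_one e2 (by positivity)
    _ = _ := by
        rw [mul_one, ENNReal.ofReal_rpow_of_nonneg (by positivity) (by positivity)]
        congr 1
        rw [show T * (R ^ (-(b - n)) / (b - n)) = (T / (b - n)) * R ^ (-(b - n)) by ring,
          Real.mul_rpow (by positivity) (by positivity), ← Real.rpow_mul hR.le]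
        congr 2
        have h2 : 1 / p' = 1 - 1 / p := by linarith
        have h4 : b * (1 / p') = n - α := by rw [hbd]; field_simp
        have h5 : (n:ℝ) / q = n / p - α := by
          rw [div_eq_mul_one_div, hq]; field_simp
        rw [h5, neg_mul, sub_mul, h4, h2]; ring

lemma weak_bound {n : ℕ} (α R : ℝ) (g : Rn n → ℝ≥0∞) (hg : Measurable g) (l : ℝ≥0∞) :
    l * volume {x | l ≤ rNear n α R g x} ≤ (∫⁻ y in closedBall (0 : Rn n) R, rK n α y) * ∫⁻ x, g x := by
  rw [← rNear_int α R g hg]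
  apply mul_meas_ge_le_lintegral
  have := rK_meas n α
  unfold rNear
  apply Measurable.lintegral_prod_right' (f := fun z : Rn n × Rn n => rK n α z.2 * g (z.1 + z.2))
  fun_prop

lemma lim_aux (L A : ℝ≥0∞) (C : ℝ) (hC : 0 < C)
    (h : ∀ a : ℝ, 0 < a → A ≤ ENNReal.ofReal a → L ≤ ENNReal.ofReal (C * a)) :
    L ≤ ENNReal.ofReal C * A := by
  by_cases hA : A = ∞
  · rw [hA, ENNReal.mul_top (by simpa using hC)]; exact le_top
  apply ENNReal.le_of_forall_pos_le_add
  intro ε hε _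
  have hε' : (0:ℝ) < ε := by exact_mod_cast hε
  have hA0 : 0 ≤ A.toReal := ENNReal.toReal_nonneg
  have hAe : ENNReal.ofReal A.toReal = A := ENNReal.ofReal_toReal hA
  have := h (A.toReal + ε / C) (by positivity) (by
    conv_lhs => rw [← hAe]
    apply ENNReal.ofReal_le_ofReal
    have : 0 < ε / C := by positivity
    linarith)
  refine this.trans_eq ?_
  rw [mul_add, ENNReal.ofReal_add (by positivity) (by positivity), ENNReal.ofReal_mul hC.le, hAe,
    mul_div_cancel₀ _ hC.ne', ENNReal.ofReal_coe_nnreal]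

lemma near_const {n : ℕ} (hn : 2 ≤ n) (α : ℝ) (hα : 0 < α) : ∃ c : ℝ, 0 < c ∧ ∀ R > 0,
    ∫⁻ y in closedBall (0 : Rn n) R, rK n α y = ENNReal.ofReal (c * R ^ α) := by
  have hT0 : 0 < (tauS n univ).toReal := ENNReal.toReal_pos (tau_ne_zero hn) (measure_ne_top _ _)
  refine ⟨(tauS n univ).toReal / α, by positivity, ?_⟩
  intro R hR
  rw [near_int hn α hα R hR, show (tauS n univ).toReal / α * R ^ α = (tauS n univ).toReal * (R ^ α / α) by ring,
    ENNReal.ofReal_mul hT0.le, ENNReal.ofReal_toReal (measure_ne_top _ _)]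

lemma weak_type {n : ℕ} (hn : 2 ≤ n) (α : ℝ) (hα : 0 < α) (hαn : α < n) :
    ∃ C : ℝ, 0 < C ∧ ∀ g : Rn n → ℝ≥0∞, Measurable g → ∀ a : ℝ, 0 < a → ∫⁻ y, g y ≤ ENNReal.ofReal a →
      ∀ l : ℝ, 0 < l → ENNReal.ofReal l * volume {x | ENNReal.ofReal l < rz n α g x} ^ (1 / ((n:ℝ) / (n - α)))
        ≤ ENNReal.ofReal (C * a) := by
  obtain ⟨c, hc, hnear⟩ := near_const hn α hα
  have hd : 0 < (n:ℝ) - α := by linarith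
  have hn0 : (0:ℝ) < n := by positivity
  refine ⟨2 * c ^ (1 / ((n:ℝ) / (n - α))), by positivity, ?_⟩
  intro g hg a ha hga l hl
  set m := 2 * a / l with hm
  have hm0 : 0 < m := by positivity
  set R := m ^ (1 / (n - α)) with hR
  have hR0 : 0 < R := by positivity
  have hfar : ∀ x, rFar n α R g x ≤ ENNReal.ofReal (l / 2) := by
    intro x
    refine (rFar_L1 α R hαn hR0 g x).trans ?_
    calc _ ≤ ENNReal.ofReal (R ^ (α - n)) * ENNReal.ofReal a := by gcongr
      _ = _ := by
        rw [← ENNReal.ofReal_mul (by positivity), hR, ← Real.rpow_mul hm0.le,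
          show 1 / (n - α) * (α - n) = -1 by field_simp; ring, Real.rpow_neg_one, hm]
        congr 1; field_simp
  have hsub : {x | ENNReal.ofReal l < rz n α g x} ⊆ {x | ENNReal.ofReal (l / 2) ≤ rNear n α R g x} := by
    intro x hx
    simp only [mem_ofPred_eq] at hx ⊢
    by_contra hlt
    rw [not_le] at hlt
    rw [rz_split n α R g x] at hx
    have : rNear n α R g x + rFar n α R g x ≤ ENNReal.ofReal l := by
      calc _ ≤ ENNReal.ofReal (l / 2) + ENNReal.ofReal (l / 2) := add_le_add hlt.le (hfar x)
        _ = _ := by rw [← ENNReal.ofReal_add (by positivity) (by positivity)]; congr 1; ring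
    exact absurd hx (not_lt.2 this)
  have hw := weak_bound α R g hg (ENNReal.ofReal (l / 2))
  rw [hnear R hR0] at hw
  have hV : volume {x | ENNReal.ofReal l < rz n α g x} ≤ ENNReal.ofReal (c * m ^ ((n:ℝ) / (n - α))) := by
    refine (measure_mono hsub).trans ?_
    have h2 : ENNReal.ofReal (l / 2) * volume {x | ENNReal.ofReal (l / 2) ≤ rNear n α R g x} ≤
      ENNReal.ofReal (l / 2) * ENNReal.ofReal (c * m ^ ((n:ℝ) / (n - α))) := by
      refine hw.trans ?_
      calc _ ≤ ENNReal.ofReal (c * R ^ α) * ENNReal.ofReal a := by gcongr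
        _ = _ := by
          rw [← ENNReal.ofReal_mul (by positivity), ← ENNReal.ofReal_mul (by positivity), hR,
            ← Real.rpow_mul hm0.le, show (n:ℝ) / (n - α) = 1 + 1 / (n - α) * α by field_simp; ring,
            Real.rpow_add hm0, Real.rpow_one]
          congr 1
          rw [show m * m ^ (1 / (n - α) * α) = 2 * a / l * m ^ (1 / (n - α) * α) by rw [← hm]]
          field_simp
    exact (ENNReal.mul_le_mul_iff_right (by simpa using hl) ENNReal.ofReal_ne_top).1 h2
  calc _ ≤ ENNReal.ofReal l * ENNReal.ofReal (c * m ^ ((n:ℝ) / (n - α))) ^ (1 / ((n:ℝ) / (n - α))) := by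
        gcongr
    _ = _ := by
      rw [ENNReal.ofReal_rpow_of_nonneg (by positivity) (by positivity), ← ENNReal.ofReal_mul hl.le,
        Real.mul_rpow (by positivity) (by positivity), ← Real.rpow_mul hm0.le, 
        mul_one_div_cancel (by positivity), Real.rpow_one, hm]
      congr 1; field_simp

lemma level_bound {n : ℕ} (hn : 2 ≤ n) (α p q : ℝ) (hα : 0 < α) (hαn : α < n) (hp : 1 < p) (hpn : p < n / α)
    (hq0 : 0 < q) (hq : 1 / q = 1 / p - α / n) :
    ∃ c : ℝ, 0 < c ∧ ∀ g : Rn n → ℝ≥0∞, Measurable g → ∫⁻ y, g y ^ p ≤ 1 → ∀ l : ℝ, 0 < l →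
      volume {x | ENNReal.ofReal (3 * l) < rz n α g x} ≤
        ENNReal.ofReal (c * l ^ (q / p))⁻¹ * ∫⁻ y in {y | ENNReal.ofReal (c * l ^ (q / p)) < g y}, g y := by
  obtain ⟨c1, hc1, hnear⟩ := near_const hn α hα
  obtain ⟨c3, hc3, hfar⟩ := rFar_Lp hn α p q hα hαn hp hpn hq
  have hn0 : (0:ℝ) < n := by positivity
  refine ⟨1 / (c1 * c3 ^ (q / n * α)), by positivity, ?_⟩
  intro g hg hg1 l hl
  set R := (c3 / l) ^ (q / n) with hR
  have hR0 : 0 < R := by positivity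
  set s := 1 / (c1 * c3 ^ (q / n * α)) * l ^ (q / p) with hs
  have hs0 : 0 < s := by positivity
  have hcs : c1 * R ^ α * s = l := by
    have e : q / p = 1 + q / n * α := by
      have : q * (1 / q) = q * (1 / p - α / n) := by rw [hq]
      rw [mul_one_div_cancel hq0.ne'] at this
      have h2 : q / p = q * (1 / p - α / n) + q / n * α := by ring
      rw [h2, ← this]
    rw [hs, hR, ← Real.rpow_mul (by positivity), Real.div_rpow hc3.le hl.le, e, Real.rpow_add hl, Real.rpow_one]
    field_simp
  have hf : ∀ x, rFar n α R g x ≤ ENNReal.ofReal l := by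
    intro x
    refine (hfar R hR0 g hg hg1 x).trans_eq ?_
    congr 1
    rw [hR, ← Real.rpow_mul (by positivity), show q / n * (-(n / q)) = -1 by field_simp, Real.rpow_neg_one]
    field_simp
  let E : Set (Rn n) := {y | ENNReal.ofReal s < g y}
  have hE : MeasurableSet E := measurableSet_lt measurable_const hg
  let g1 : Rn n → ℝ≥0∞ := E.indicator g
  let g2 : Rn n → ℝ≥0∞ := Eᶜ.indicator g
  have hg1m : Measurable g1 := hg.indicator hE
  have hgs : ∀ y, g y = g1 y + g2 y := fun y => (congrFun (indicator_self_add_compl E g) y).symm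
  have hK := rK_meas n α
  have hns : ∀ x, rNear n α R g x = rNear n α R g1 x + rNear n α R g2 x := by
    intro x
    unfold rNear
    rw [← lintegral_add_left (by fun_prop)]
    apply lintegral_congr
    intro y
    rw [hgs, mul_add]
  have hn2 : ∀ x, rNear n α R g2 x ≤ ENNReal.ofReal l := by
    intro x
    refine (rNear_bdd α R g2 (ENNReal.ofReal s) ?_ x).trans_eq ?_
    · intro y
      by_cases hy : y ∈ E
      · simp [g2, hy]
      · have : g2 y = g y := by simp [g2, hy]
        rw [this]
        exact not_lt.1 hy
    · rw [hnear R hR0, ← ENNReal.ofReal_mul (by positivity), hcs]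
  have hsub : {x | ENNReal.ofReal (3 * l) < rz n α g x} ⊆ {x | ENNReal.ofReal l ≤ rNear n α R g1 x} := by
    intro x hx
    simp only [mem_ofPred_eq] at hx ⊢
    by_contra hlt
    rw [not_le] at hlt
    rw [rz_split n α R g x, hns] at hx
    refine absurd hx (not_lt.2 ?_)
    calc _ ≤ ENNReal.ofReal l + ENNReal.ofReal l + ENNReal.ofReal l :=
          add_le_add (add_le_add hlt.le (hn2 x)) (hf x)
        _ = _ := by
          rw [← ENNReal.ofReal_add (by positivity) (by positivity),
            ← ENNReal.ofReal_add (by positivity) (by positivity)]; congr 1; ring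
  refine (measure_mono hsub).trans ?_
  have hw := weak_bound α R g1 hg1m (ENNReal.ofReal l)
  rw [hnear R hR0, lintegral_indicator hE] at hw
  have h3 : ENNReal.ofReal l * volume {x | ENNReal.ofReal l ≤ rNear n α R g1 x} ≤
      ENNReal.ofReal l * (ENNReal.ofReal s⁻¹ * ∫⁻ y in E, g y) := by
    refine hw.trans_eq ?_
    rw [← mul_assoc, ← ENNReal.ofReal_mul hl.le]
    congr 2
    rw [← hcs]; field_simp
  exact (ENNReal.mul_le_mul_iff_right (by simpa using hl) ENNReal.ofReal_ne_top).1 h3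

lemma strong_type {n : ℕ} (hn : 2 ≤ n) (α p q : ℝ) (hα : 0 < α) (hαn : α < n) (hp : 1 < p) (hpn : p < n / α)
    (hq0 : 0 < q) (hq : 1 / q = 1 / p - α / n) :
    ∃ C : ℝ, 0 < C ∧ ∀ γ : Rn n → ℝ, Measurable γ → (∀ x, 0 ≤ γ x) →
      (∀ x, rz n α (fun y => ENNReal.ofReal (γ y)) x ≠ ∞) →
      ∫⁻ y, ENNReal.ofReal (γ y) ^ p ≤ 1 →
      ∫⁻ x, rz n α (fun y => ENNReal.ofReal (γ y)) x ^ q ≤ ENNReal.ofReal C := by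
  obtain ⟨c, hc, hlev⟩ := level_bound hn α p q hα hαn hp hpn hq0 hq
  have hp0 : 0 < p := by linarith
  set e := q - q / p with he
  have he0 : 0 < e := by
    have : q / p < q := div_lt_self hq0 hp
    linarith
  refine ⟨3 ^ q * (q * (c⁻¹ * ((c⁻¹) ^ (p - 1) / e))), by positivity, ?_⟩
  intro γ hγ hγ0 hfin hγ1
  set g : Rn n → ℝ≥0∞ := fun y => ENNReal.ofReal (γ y) with hg
  have hgm : Measurable g := by fun_prop
  let F : Rn n → ℝ := fun x => (rz n α g x).toReal / 3
  have hF0 : ∀ x, 0 ≤ F x := fun x => by positivity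
  have hFm : Measurable F := (rz_meas n α g hgm).ennreal_toReal.div_const 3
  have e1 : ∀ x, rz n α g x ^ q = ENNReal.ofReal (3 ^ q) * ENNReal.ofReal (F x ^ q) := by
    intro x
    rw [← ENNReal.ofReal_mul (by positivity), ← Real.mul_rpow (by positivity) (hF0 x),
      ← ENNReal.ofReal_rpow_of_nonneg (by have := hF0 x; positivity) hq0.le]
    congr 1
    rw [show 3 * F x = (rz n α g x).toReal by simp only [F]; ring, ENNReal.ofReal_toReal (hfin x)]
  simp only [e1]
  rw [lintegral_const_mul' _ _ ENNReal.ofReal_ne_top,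
    lintegral_rpow_eq_lintegral_meas_lt_mul volume (Eventually.of_forall hF0) hFm.aemeasurable hq0,
    ENNReal.ofReal_mul (by positivity), ENNReal.ofReal_mul hq0.le]
  gcongr
  have e2 : ∀ t : ℝ, 0 < t → {a | t < F a} = {x | ENNReal.ofReal (3 * t) < rz n α g x} := by
    intro t ht
    ext x
    simp only [mem_ofPred_eq, F]
    rw [lt_div_iff₀ (by norm_num), ENNReal.ofReal_lt_iff_lt_toReal (by positivity) (hfin x), mul_comm]
  -- the kernel on the product
  let Ψ : ℝ → Rn n → ℝ≥0∞ := fun t y =>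
    if c * t ^ (q / p) < γ y then ENNReal.ofReal (c⁻¹ * t ^ (e - 1)) * g y else 0
  have hΨ : Measurable (Function.uncurry Ψ) := by
    have hs : MeasurableSet {z : ℝ × Rn n | c * z.1 ^ (q / p) < γ z.2} :=
      measurableSet_lt (by fun_prop) (by fun_prop)
    exact Measurable.ite hs (by fun_prop) measurable_const
  calc ∫⁻ t in Ioi 0, volume {a | t < F a} * ENNReal.ofReal (t ^ (q - 1))
      ≤ ∫⁻ t in Ioi 0, ∫⁻ y, Ψ t y := by
        apply setLIntegral_mono' measurableSet_Ioi
        intro t ht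
        have ht0 : 0 < t := ht
        rw [e2 t ht0]
        have hs0 : 0 < c * t ^ (q / p) := by positivity
        have hE : MeasurableSet {y | ENNReal.ofReal (c * t ^ (q / p)) < g y} :=
          measurableSet_lt measurable_const hgm
        calc _ ≤ (ENNReal.ofReal (c * t ^ (q / p))⁻¹ *
              ∫⁻ y in {y | ENNReal.ofReal (c * t ^ (q / p)) < g y}, g y) * ENNReal.ofReal (t ^ (q - 1)) := by
              gcongr
              exact hlev g hgm hγ1 t ht0
          _ = ENNReal.ofReal (c⁻¹ * t ^ (e - 1)) * ∫⁻ y in {y | ENNReal.ofReal (c * t ^ (q / p)) < g y}, g y := by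
              rw [mul_right_comm, ← ENNReal.ofReal_mul (by positivity)]
              congr 2
              rw [mul_inv, mul_assoc, ← Real.rpow_neg ht0.le, ← Real.rpow_add ht0]
              congr 2; rw [he]; ring
          _ = ∫⁻ y, Ψ t y := by
              rw [← lintegral_const_mul _ hgm, ← lintegral_indicator hE]
              apply lintegral_congr
              intro y
              simp only [indicator, mem_ofPred_eq, Ψ, hg]
              simp only [ENNReal.ofReal_lt_ofReal_iff_of_nonneg hs0.le]
          _ ≤ _ := le_rfl
    _ = ∫⁻ y, ∫⁻ t in Ioi 0, Ψ t y := lintegral_lintegral_swap hΨ.aemeasurable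
    _ ≤ ∫⁻ y, ENNReal.ofReal (c⁻¹ * ((c⁻¹) ^ (p - 1) / e)) * g y ^ p := by
        apply lintegral_mono
        intro y
        dsimp only
        set Λ := (c⁻¹ * γ y) ^ (p / q) with hΛ
        have hγy := hγ0 y
        have hΛ0 : 0 ≤ Λ := by positivity
        calc ∫⁻ t in Ioi 0, Ψ t y
            ≤ ∫⁻ t in Ioi 0, (Ioc 0 Λ).indicator
                (fun t => ENNReal.ofReal (t ^ (e - 1)) * (ENNReal.ofReal c⁻¹ * g y)) t := by
              apply setLIntegral_mono' measurableSet_Ioi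
              intro t ht
              have ht0 : 0 < t := ht
              by_cases hlt : c * t ^ (q / p) < γ y
              · have : t ∈ Ioc 0 Λ := by
                  refine ⟨ht0, ?_⟩
                  have h1 : t ^ (q / p) ≤ c⁻¹ * γ y := by
                    rw [inv_mul_eq_div, le_div_iff₀ hc, mul_comm]; exact hlt.le
                  have h2 := Real.rpow_le_rpow (by positivity) h1 (show 0 ≤ p / q by positivity)
                  rwa [← Real.rpow_mul ht0.le, show q / p * (p / q) = 1 by field_simp, Real.rpow_one] at h2
                simp only [Ψ, hlt, if_true, indicator_of_mem this]
                rw [ENNReal.ofReal_mul (by positivity)]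
                apply le_of_eq; ring
              · simp [Ψ, hlt]
          _ ≤ ∫⁻ t, (Ioc 0 Λ).indicator
                (fun t => ENNReal.ofReal (t ^ (e - 1)) * (ENNReal.ofReal c⁻¹ * g y)) t :=
              setLIntegral_le_lintegral _ _
          _ = ENNReal.ofReal (Λ ^ e / e) * (ENNReal.ofReal c⁻¹ * g y) := by
              rw [lintegral_indicator measurableSet_Ioc, lintegral_mul_const _ (by fun_prop),
                int_rpow_zero e Λ he0 hΛ0]
          _ = _ := by
              simp only [hg]
              rw [ENNReal.ofReal_rpow_of_nonneg hγy hp0.le, ← ENNReal.ofReal_mul (by positivity),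
                ← ENNReal.ofReal_mul (by positivity), ← ENNReal.ofReal_mul (by positivity)]
              congr 1
              have h3 : Λ ^ e = (c⁻¹) ^ (p - 1) * γ y ^ (p - 1) := by
                rw [hΛ, ← Real.rpow_mul (by positivity), ← Real.mul_rpow (by positivity) hγy]
                congr 1; rw [he]; field_simp
              have h4 : γ y ^ p = γ y ^ (p - 1) * γ y := by
                rcases hγy.eq_or_lt with h0 | h0
                · rw [← h0, Real.zero_rpow hp0.ne', mul_zero]
                · rw [← Real.rpow_add_one h0.ne']; congr 1; ring
              rw [h3, h4]; ring
    _ = ENNReal.ofReal (c⁻¹ * ((c⁻¹) ^ (p - 1) / e)) * ∫⁻ y, g y ^ p :=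
        lintegral_const_mul' _ _ ENNReal.ofReal_ne_top
    _ ≤ _ := by
        calc _ ≤ ENNReal.ofReal (c⁻¹ * ((c⁻¹) ^ (p - 1) / e)) * 1 := by gcongr
          _ = _ := mul_one _

lemma sphMax_le {n : ℕ} (hn : 2 ≤ n) (α : ℝ) (hα1 : 1 ≤ α) (f : Rn n → ℝ) (hf : IsCcSmooth f) (x : Rn n) :
    sphMax n (α - 1) f x ≤ (tauS n univ)⁻¹ * rz n α (fun y => ENNReal.ofReal (gradNorm f y)) x := by
  have hgm : Measurable (fun y => ENNReal.ofReal (gradNorm f y)) := by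
    have : Continuous (gradient f) :=
      (LinearIsometryEquiv.continuous _).comp (hf.1.continuous_fderiv (by simp))
    exact this.norm.measurable.ennreal_ofReal
  unfold sphMax
  refine iSup₂_le ?_
  intro r hr
  have huc : UniformContinuous (fun y => |f y|) := by
    have := hf.2.uniformContinuous_of_continuous hf.1.continuous
    exact Real.uniformContinuous_abs.comp this
  have h1 := sphere_avg hn x r hr (fun y => |f y|) huc
  have h2 : ∫⁻ θ : sphere (0 : Rn n) 1, ENNReal.ofReal |f (x + r • (θ : Rn n))| ∂(tauS n) ≤
      ∫⁻ θ : sphere (0 : Rn n) 1, (∫⁻ s in Ioi r, ENNReal.ofReal (gradNorm f (x + s • (θ : Rn n)))) ∂(tauS n) := by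
    apply lintegral_mono
    intro θ
    exact ftc f hf.1 hf.2 x θ (norm_eq_of_mem_sphere θ) r
  have h3 := polar_bound hn α hα1 _ hgm x r hr
  calc _ ≤ ENNReal.ofReal (r ^ (α - 1)) * ((tauS n univ)⁻¹ * ∫⁻ θ : sphere (0 : Rn n) 1,
          (∫⁻ s in Ioi r, ENNReal.ofReal (gradNorm f (x + s • (θ : Rn n)))) ∂(tauS n)) := by
        refine mul_le_mul' le_rfl (h1.trans (mul_le_mul' le_rfl h2))
    _ = (tauS n univ)⁻¹ * (ENNReal.ofReal (r ^ (α - 1)) * ∫⁻ θ : sphere (0 : Rn n) 1,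
          (∫⁻ s in Ioi r, ENNReal.ofReal (gradNorm f (x + s • (θ : Rn n)))) ∂(tauS n)) := by ring
    _ ≤ _ := by
        gcongr
        exact h3

lemma gradNorm_cont {n : ℕ} (f : Rn n → ℝ) (hf : IsCcSmooth f) : Continuous (gradNorm f) := by
  have : Continuous (gradient f) :=
    (LinearIsometryEquiv.continuous _).comp (hf.1.continuous_fderiv (by simp))
  exact this.norm

lemma gradNorm_supp {n : ℕ} (f : Rn n → ℝ) (hf : IsCcSmooth f) : HasCompactSupport (gradNorm f) := by
  have h1 : HasCompactSupport (fderiv ℝ f) := hf.2.fderiv (𝕜 := ℝ)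
  have : gradNorm f = fun y => ‖fderiv ℝ f y‖ := by
    ext y; rw [gradNorm, gradient, LinearIsometryEquiv.norm_map]
  rw [this]
  exact h1.norm

lemma rz_fin {n : ℕ} (hn : 2 ≤ n) (α : ℝ) (hα : 0 < α) (hαn : α < n) (γ : Rn n → ℝ) (hγ : Continuous γ)
    (hs : HasCompactSupport γ) (x : Rn n) : rz n α (fun y => ENNReal.ofReal (γ y)) x ≠ ∞ := by
  obtain ⟨c, hc, hnear⟩ := near_const hn α hα
  obtain ⟨M, hM⟩ := hγ.bounded_above_of_compact_support hs
  have hint : ∫⁻ y, ENNReal.ofReal (γ y) ≠ ∞ := by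
    have := (hγ.integrable_of_hasCompactSupport hs (μ := volume)).lintegral_lt_top
    exact this.ne
  rw [rz_split n α 1]
  refine ENNReal.add_ne_top.2 ⟨?_, ?_⟩
  · refine ne_top_of_le_ne_top ?_ (rNear_bdd α 1 _ (ENNReal.ofReal M) ?_ x)
    · rw [hnear 1 one_pos]; exact ENNReal.mul_ne_top ENNReal.ofReal_ne_top ENNReal.ofReal_ne_top
    · intro y
      exact ENNReal.ofReal_le_ofReal ((le_abs_self _).trans (hM y))
  · exact ne_top_of_le_ne_top (ENNReal.mul_ne_top ENNReal.ofReal_ne_top hint) (rFar_L1 α 1 hαn one_pos _ x)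

lemma lqNorm_const_mul {n : ℕ} (q : ℝ) (hq : 0 < q) (c : ℝ≥0∞) (hc : c ≠ ∞) (u : Rn n → ℝ≥0∞) :
    lqNorm n q (fun x => c * u x) = c * lqNorm n q u := by
  unfold lqNorm
  simp only [ENNReal.mul_rpow_of_nonneg _ _ hq.le]
  rw [lintegral_const_mul' _ _ (ENNReal.rpow_ne_top_of_nonneg hq.le hc),
    ENNReal.mul_rpow_of_nonneg _ _ (by positivity), ← ENNReal.rpow_mul, mul_one_div_cancel hq.ne',
    ENNReal.rpow_one]

lemma lqNorm_mono {n : ℕ} (q : ℝ) (hq : 0 < q) (u v : Rn n → ℝ≥0∞) (h : ∀ x, u x ≤ v x) :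
    lqNorm n q u ≤ lqNorm n q v := by
  unfold lqNorm
  gcongr with x
  exact h x


/-- Sobolev bounds for the fractional spherical maximal operator:
`𝒮_{α-1} : Ẇ^{1,p} → L^q` for `1 < p < n/α`, `1/q = 1/p - α/n`, and the weak-type endpoint
`𝒮_{α-1} : Ẇ^{1,1} → L^{n/(n-α),∞}`. -/
theorem statement16 (n : ℕ) (hn : 2 ≤ n) (α : ℝ) (hα1 : 1 ≤ α) (hαn : α < n) :
    (∀ p q : ℝ, 1 < p → p < n / α → 1 / q = 1 / p - α / n →
      ∃ C > (0 : ℝ), ∀ f : Rn n → ℝ, IsCcSmooth f →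
        lqNorm n q (sphMax n (α - 1) f) ≤
          ENNReal.ofReal C * lqNorm n p (fun x => ENNReal.ofReal (gradNorm f x))) ∧
    (∃ C > (0 : ℝ), ∀ f : Rn n → ℝ, IsCcSmooth f →
      weakNorm n ((n : ℝ) / ((n : ℝ) - α)) (sphMax n (α - 1) f) ≤
        ENNReal.ofReal C * lqNorm n 1 (fun x => ENNReal.ofReal (gradNorm f x))) := by
  have hα0 : 0 < α := by linarith
  have hn0 : (0:ℝ) < n := by positivity
  set T := (tauS n univ).toReal with hT
  have hT0 : 0 < T := ENNReal.toReal_pos (tau_ne_zero hn) (measure_ne_top _ _)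
  have hTi : (tauS n univ)⁻¹ = ENNReal.ofReal T⁻¹ := by
    rw [ENNReal.ofReal_inv_of_pos hT0, hT, ENNReal.ofReal_toReal (measure_ne_top _ _)]
  constructor
  · intro p q hp hpn hq
    have hp0 : 0 < p := by linarith
    have hq0 : 0 < q := by
      have : 0 < 1 / q := by
        rw [hq, sub_pos, div_lt_div_iff₀ hn0 hp0, one_mul]
        rwa [lt_div_iff₀ hα0, mul_comm] at hpn
      exact one_div_pos.1 this
    obtain ⟨C, hC, hst⟩ := strong_type hn α p q hα0 hαn hp hpn hq0 hq
    refine ⟨T⁻¹ * C ^ (1 / q), by positivity, ?_⟩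
    intro f hf
    apply lim_aux _ _ _ (by positivity)
    intro a ha hA
    have hgc := gradNorm_cont f hf
    have hgs := gradNorm_supp f hf
    let γ : Rn n → ℝ := fun y => a⁻¹ * gradNorm f y
    have hγc : Continuous γ := continuous_const.mul hgc
    have hγs : HasCompactSupport γ := hgs.mul_left
    have hγ0 : ∀ x, 0 ≤ γ x := fun x => mul_nonneg (by positivity) (norm_nonneg _)
    have hγe : ∀ y, ENNReal.ofReal (gradNorm f y) = ENNReal.ofReal a * ENNReal.ofReal (γ y) := by
      intro y
      rw [← ENNReal.ofReal_mul ha.le, mul_inv_cancel_left₀ ha.ne']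
    have h1 : ∫⁻ y, ENNReal.ofReal (γ y) ^ p ≤ 1 := by
      simp only [hγe] at hA
      rw [lqNorm_const_mul p hp0 _ ENNReal.ofReal_ne_top] at hA
      have hA' : ENNReal.ofReal a * lqNorm n p (fun y => ENNReal.ofReal (γ y)) ≤ ENNReal.ofReal a * 1 := by
        rwa [mul_one]
      have hA2 := (ENNReal.mul_le_mul_iff_right (by simpa using ha) ENNReal.ofReal_ne_top).1 hA'
      unfold lqNorm at hA2
      have hA3 := ENNReal.rpow_le_rpow hA2 hp0.le
      rwa [← ENNReal.rpow_mul, one_div_mul_cancel hp0.ne', ENNReal.rpow_one, ENNReal.one_rpow] at hA3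
    have h2 := hst γ hγc.measurable hγ0 (rz_fin hn α hα0 hαn γ hγc hγs) h1
    have hrz : ∀ x, sphMax n (α - 1) f x ≤
        ENNReal.ofReal (T⁻¹ * a) * rz n α (fun y => ENNReal.ofReal (γ y)) x := by
      intro x
      refine (sphMax_le hn α hα1 f hf x).trans_eq ?_
      rw [hTi, ENNReal.ofReal_mul (by positivity), mul_assoc]
      congr 1
      unfold rz
      rw [← lintegral_const_mul' _ _ ENNReal.ofReal_ne_top]
      apply lintegral_congr
      intro y
      show rK n α y * ENNReal.ofReal (gradNorm f (x + y)) = ENNReal.ofReal a * (rK n α y * ENNReal.ofReal (γ (x + y)))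
      rw [hγe]; ring
    refine (lqNorm_mono q hq0 _ _ hrz).trans ?_
    rw [lqNorm_const_mul q hq0 _ ENNReal.ofReal_ne_top]
    calc _ ≤ ENNReal.ofReal (T⁻¹ * a) * ENNReal.ofReal C ^ (1 / q) := by
          unfold lqNorm; gcongr
      _ = _ := by
          rw [ENNReal.ofReal_rpow_of_nonneg hC.le (by positivity), ← ENNReal.ofReal_mul (by positivity)]
          congr 1; ring
  · obtain ⟨C, hC, hw⟩ := weak_type hn α hα0 hαn
    refine ⟨T⁻¹ * C, by positivity, ?_⟩
    intro f hf
    apply lim_aux _ _ _ (by positivity)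
    intro a ha hA
    have hgc := gradNorm_cont f hf
    have hA1 : ∫⁻ y, ENNReal.ofReal (gradNorm f y) ≤ ENNReal.ofReal a := by
      simpa [lqNorm] using hA
    unfold weakNorm
    refine iSup₂_le ?_
    intro l hl
    have hsub : {x | ENNReal.ofReal l < sphMax n (α - 1) f x} ⊆
        {x | ENNReal.ofReal (T * l) < rz n α (fun y => ENNReal.ofReal (gradNorm f y)) x} := by
      intro x hx
      have h1 := lt_of_lt_of_le hx (sphMax_le hn α hα1 f hf x)
      rw [hTi] at h1
      have h2 := ENNReal.mul_lt_mul_right (a := ENNReal.ofReal T) (by simpa using hT0) ENNReal.ofReal_ne_top h1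
      rw [← mul_assoc, ← ENNReal.ofReal_mul hT0.le, ← ENNReal.ofReal_mul hT0.le, mul_inv_cancel₀ hT0.ne',
        ENNReal.ofReal_one, one_mul] at h2
      exact h2
    have h3 := hw _ hgc.measurable.ennreal_ofReal a ha hA1 (T * l) (by positivity)
    have hd : 0 < (n:ℝ) - α := by linarith
    calc _ ≤ ENNReal.ofReal l * volume {x | ENNReal.ofReal (T * l) <
            rz n α (fun y => ENNReal.ofReal (gradNorm f y)) x} ^ (1 / ((n:ℝ) / (n - α))) := by
          gcongr
      _ = ENNReal.ofReal T⁻¹ * (ENNReal.ofReal (T * l) * volume {x | ENNReal.ofReal (T * l) <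
            rz n α (fun y => ENNReal.ofReal (gradNorm f y)) x} ^ (1 / ((n:ℝ) / (n - α)))) := by
          rw [← mul_assoc, ← ENNReal.ofReal_mul (by positivity), inv_mul_cancel_left₀ hT0.ne']
      _ ≤ ENNReal.ofReal T⁻¹ * ENNReal.ofReal (C * a) := by gcongr
      _ = _ := by rw [← ENNReal.ofReal_mul (by positivity), mul_assoc]

end
end
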